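/- Fix n ≥ 3, p > 2 with p < n, and set κ = (n−p)/(p−1) > 0. Let u be a positive p-harmonic function on B_5(0) ⊂ ℝⁿ with u(0) = 1, and let z with |z| ≤ 2 and 0 < r ≤ 1 be such that 0 ∉ closure(B_r(z)). Then inf_{B_r(z)} u ≤ c(p,n)·r^{−κ}, where c(p,n) depends only on p and n. -/

import Mathlib

open Metric Set
open scoped RealInnerProductSpace

/-!
The radial power `‖x - z‖ ^ (-κ)` is `p`-harmonic off `z`, since its flux is a multiple of the
divergence-free field `‖x - z‖ ^ (-n) • (x - z)`. Let `m` be the infimum of `u` over the ball of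
radius `r`. The multiple of `‖x - z‖ ^ (-κ) - 3 ^ (-κ)` equal to `m` on the sphere of radius `r`
lies below `u` on both boundary spheres of the annulus `r < ‖x - z‖ < 3`, hence on the annulus, and
its value at the origin is at least a constant times `m * r ^ κ`.

The comparison principle is the monotonicity argument: the excess of one solution over the other,
smoothly truncated at a small height, is an admissible test function, and strict monotonicity of the
flux forces its gradient to vanish. The delicate point is that a solution is only assumed
differentiable, so the energy `‖∇ u‖ ^ p` need not be locally integrable a priori. At each point `u`
has a finite pointwise Lipschitz constant, so by Baire's theorem a nonempty set `S` of bad points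
meets some ball in a piece on which this constant and its scale are uniform. Near that piece there
is a Lipschitz barrier lying below `u` on `S` and above `u` off `S`; off `S` the energy estimate for
the excess of the barrier over `u` applies, and on `S` the gradient is bounded. So no point is bad.
-/

section Development

open MeasureTheory Filter Topology ENNReal
open scoped Gradient ContDiff Convolution

section Flux

variable {V : Type*} [NormedAddCommGroup V] [InnerProductSpace ℝ V] {p : ℝ}

/-- The nonlinearity `ξ ↦ |ξ|^(p-2) ξ` of the `p`-Laplacian, so that the `p`-Laplace equation for
`u` reads `div (pFlux p (∇ u)) = 0`. -/
noncomputable def pFlux (p : ℝ) (ξ : V) : V := ‖ξ‖ ^ (p - 2) • ξ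

lemma inner_pFlux_self (hp : 1 < p) (ξ : V) : ⟪pFlux p ξ, ξ⟫ = ‖ξ‖ ^ p := by
  rw [pFlux, real_inner_smul_left, real_inner_self_eq_norm_sq, ← Real.rpow_two,
    ← Real.rpow_add' (norm_nonneg ξ) (by linarith), sub_add_cancel]

lemma norm_pFlux (hp : 1 < p) (ξ : V) : ‖pFlux p ξ‖ = ‖ξ‖ ^ (p - 1) := by
  rw [pFlux, norm_smul, Real.norm_of_nonneg (by positivity),
    ← Real.rpow_add_one' (norm_nonneg ξ) (by linarith)]
  congr 1
  ring

lemma pFlux_smul (c : ℝ) (ξ : V) : pFlux p (c • ξ) = (|c| ^ (p - 2) * c) • pFlux p ξ := by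
  simp only [pFlux, norm_smul, Real.norm_eq_abs, Real.mul_rpow (abs_nonneg c) (norm_nonneg ξ),
    smul_smul]
  congr 1
  ring

lemma measurable_pFlux [MeasurableSpace V] [BorelSpace V] [SecondCountableTopology V] :
    Measurable (pFlux p : V → V) :=
  (measurable_norm.pow_const (p - 2)).smul measurable_id

lemma inner_pFlux_sub_pFlux (hp : 1 < p) (ξ η : V) :
    ⟪pFlux p ξ - pFlux p η, ξ - η⟫ =
      (‖ξ‖ ^ (p - 1) - ‖η‖ ^ (p - 1)) * (‖ξ‖ - ‖η‖) +
        (‖ξ‖ ^ (p - 2) + ‖η‖ ^ (p - 2)) * (‖ξ‖ * ‖η‖ - ⟪ξ, η⟫) := by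
  have rpow_step : ∀ ζ : V, ‖ζ‖ ^ (p - 1) = ‖ζ‖ ^ (p - 2) * ‖ζ‖ := fun ζ => by
    rw [← norm_pFlux hp, pFlux, norm_smul, Real.norm_of_nonneg (by positivity)]
  simp only [pFlux, inner_sub_left, inner_sub_right, real_inner_smul_left,
    real_inner_self_eq_norm_sq, rpow_step, real_inner_comm ξ η]
  ring

lemma rpow_sub_rpow_mul_sub_nonneg {a b s : ℝ} (ha : 0 ≤ a) (hb : 0 ≤ b) (hs : 0 ≤ s) :
    0 ≤ (a ^ s - b ^ s) * (a - b) := by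
  rcases le_total a b with h | h
  · exact mul_nonneg_of_nonpos_of_nonpos
      (sub_nonpos.2 (Real.rpow_le_rpow ha h hs)) (sub_nonpos.2 h)
  · exact mul_nonneg (sub_nonneg.2 (Real.rpow_le_rpow hb h hs)) (sub_nonneg.2 h)

lemma inner_pFlux_sub_pFlux_nonneg (hp : 1 < p) (ξ η : V) :
    0 ≤ ⟪pFlux p ξ - pFlux p η, ξ - η⟫ := by
  rw [inner_pFlux_sub_pFlux hp]
  exact add_nonneg
    (rpow_sub_rpow_mul_sub_nonneg (norm_nonneg ξ) (norm_nonneg η) (by linarith))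
    (mul_nonneg (by positivity) (sub_nonneg.2 (real_inner_le_norm ξ η)))

lemma eq_of_inner_pFlux_sub_pFlux_eq_zero (hp : 1 < p) {ξ η : V}
    (h : ⟪pFlux p ξ - pFlux p η, ξ - η⟫ = 0) : ξ = η := by
  rw [inner_pFlux_sub_pFlux hp] at h
  have radial_nonneg := rpow_sub_rpow_mul_sub_nonneg (norm_nonneg ξ) (norm_nonneg η)
    (by linarith : 0 ≤ p - 1)
  have cauchy_schwarz : 0 ≤ ‖ξ‖ * ‖η‖ - ⟪ξ, η⟫ := sub_nonneg.2 (real_inner_le_norm ξ η)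
  have angular_nonneg := mul_nonneg
    (by positivity : 0 ≤ ‖ξ‖ ^ (p - 2) + ‖η‖ ^ (p - 2)) cauchy_schwarz
  have norm_eq : ‖ξ‖ = ‖η‖ := by
    rcases mul_eq_zero.1 (by linarith : (‖ξ‖ ^ (p - 1) - ‖η‖ ^ (p - 1)) * (‖ξ‖ - ‖η‖) = 0)
      with h | h
    · exact (Real.rpow_left_inj (norm_nonneg ξ) (norm_nonneg η) (by linarith)).1
        (sub_eq_zero.1 h)
    · exact sub_eq_zero.1 h
  rcases eq_or_ne η 0 with rfl | hη
  · simpa using norm_eq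
  have inner_eq : ‖ξ‖ * ‖η‖ - ⟪ξ, η⟫ = 0 := by
    refine (mul_eq_zero.1 (by linarith :
      (‖ξ‖ ^ (p - 2) + ‖η‖ ^ (p - 2)) * (‖ξ‖ * ‖η‖ - ⟪ξ, η⟫) = 0)).resolve_left ?_
    have := Real.rpow_pos_of_pos (norm_pos_iff.2 hη) (p - 2)
    positivity
  rw [← sub_eq_zero, ← norm_eq_zero, ← sq_eq_zero_iff, norm_sub_sq_real]
  linear_combination 2 * inner_eq + (‖ξ‖ - ‖η‖) * norm_eq

lemma inner_pFlux_sub_le {A : ℝ} (hp : 1 < p) (ξ : V) {η : V} (hη : ‖η‖ ≤ A) :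
    ⟪pFlux p ξ, η - ξ⟫ ≤ A * (2 * A) ^ (p - 1) - ‖ξ‖ ^ p / 2 := by
  have hA : 0 ≤ A := (norm_nonneg η).trans hη
  have cauchy_schwarz : ⟪pFlux p ξ, η⟫ ≤ A * ‖ξ‖ ^ (p - 1) := by
    rw [← norm_pFlux hp, mul_comm]
    exact (real_inner_le_norm _ _).trans (by gcongr)
  have rpow_eq : ‖ξ‖ ^ p = ‖ξ‖ ^ (p - 1) * ‖ξ‖ := by
    rw [← Real.rpow_add_one' (norm_nonneg ξ) (by linarith), sub_add_cancel]
  have young : A * ‖ξ‖ ^ (p - 1) ≤ A * (2 * A) ^ (p - 1) + ‖ξ‖ ^ p / 2 := by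
    rcases le_total ‖ξ‖ (2 * A) with h | h
    · have : ‖ξ‖ ^ (p - 1) ≤ (2 * A) ^ (p - 1) := by gcongr
      linarith [mul_le_mul_of_nonneg_left this hA, Real.rpow_nonneg (norm_nonneg ξ) p]
    · have : 0 ≤ A * (2 * A) ^ (p - 1) := by positivity
      have := mul_le_mul_of_nonneg_left h (Real.rpow_nonneg (norm_nonneg ξ) (p - 1))
      rw [rpow_eq]
      linarith
  rw [inner_sub_right, inner_pFlux_self hp]
  linarith

lemma inner_pFlux_smul_sub_le {A s : ℝ} (hp : 1 < p) (ξ : V) {η : V} (hη : ‖η‖ ≤ A)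
    (hs₀ : 0 ≤ s) (hs₁ : s ≤ 1) :
    ⟪pFlux p ξ, s • (η - ξ)⟫ ≤ A * (2 * A) ^ (p - 1) - s * (‖ξ‖ ^ p / 2) := by
  have hA : 0 ≤ A := (norm_nonneg η).trans hη
  have bound_nonneg : 0 ≤ A * (2 * A) ^ (p - 1) := by positivity
  calc ⟪pFlux p ξ, s • (η - ξ)⟫
      ≤ s * (A * (2 * A) ^ (p - 1) - ‖ξ‖ ^ p / 2) := by
        rw [real_inner_smul_right]
        exact mul_le_mul_of_nonneg_left (inner_pFlux_sub_le hp ξ hη) hs₀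
    _ ≤ A * (2 * A) ^ (p - 1) - s * (‖ξ‖ ^ p / 2) := by
        rw [mul_sub]
        exact sub_le_sub_right (mul_le_of_le_one_left bound_nonneg hs₁) _

end Flux

section Gradient

variable {V : Type*} [NormedAddCommGroup V] [InnerProductSpace ℝ V] [CompleteSpace V]
  {u : V → ℝ} {x : V}

lemma norm_gradient (u : V → ℝ) (x : V) : ‖∇ u x‖ = ‖fderiv ℝ u x‖ :=
  LinearIsometryEquiv.norm_map _ _

lemma gradient_of_notMem_tsupport (hx : x ∉ tsupport u) : ∇ u x = 0 := by
  rw [← norm_eq_zero, norm_gradient, norm_eq_zero]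
  by_contra h
  exact hx (support_fderiv_subset ℝ h)

lemma measurable_gradient [MeasurableSpace V] [BorelSpace V] (u : V → ℝ) :
    Measurable (∇ u) :=
  (LinearIsometryEquiv.continuous _).measurable.comp (measurable_fderiv ℝ u)

lemma gradient_const_mul_add (hu : DifferentiableAt ℝ u x) (c d : ℝ) :
    ∇ (fun y => c * u y + d) x = c • ∇ u x := by
  refine HasGradientAt.gradient ?_
  rw [hasGradientAt_iff_hasFDerivAt, map_smul, toDual_gradient]
  exact (hu.hasFDerivAt.const_mul c).add_const d

lemma fderiv_const_sub_apply (hu : Differentiable ℝ u) (y t v : V) :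
    fderiv ℝ (fun s => u (y - s)) t v = -⟪v, ∇ u (y - t)⟫ := by
  have chain_rule : HasFDerivAt (fun s => u (y - s)) _ t :=
    (hu (y - t)).hasFDerivAt.comp t ((hasFDerivAt_id t).const_sub y)
  rw [chain_rule.fderiv, real_inner_comm, inner_gradient_left]
  simp

end Gradient

variable {E : Type*} [NormedAddCommGroup E] [InnerProductSpace ℝ E] [FiniteDimensional ℝ E]
  [MeasurableSpace E] [BorelSpace E] {p : ℝ} {u : E → ℝ} {Ω : Set E}

section PHarmonic

/-- `u` is `p`-harmonic on the open set `Ω`: it is differentiable there and solves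
`div (pFlux p (∇ u)) = 0` weakly, tested against smooth functions with compact support in `Ω`.
No power of `∇ u` is assumed to be locally integrable. -/
structure IsPHarmonicOn (p : ℝ) (u : E → ℝ) (Ω : Set E) : Prop where
  differentiableOn : DifferentiableOn ℝ u Ω
  integral_eq_zero : ∀ φ : E → ℝ, ContDiff ℝ ∞ φ → HasCompactSupport φ → tsupport φ ⊆ Ω →
    ∫ x in Ω, ⟪pFlux p (∇ u x), ∇ φ x⟫ = 0

lemma setIntegral_inner_gradient_eq_integral {φ : E → ℝ} (F : E → E) (hφ : tsupport φ ⊆ Ω) :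
    ∫ x in Ω, ⟪F x, ∇ φ x⟫ = ∫ x, ⟪F x, ∇ φ x⟫ :=
  setIntegral_eq_integral_of_forall_compl_eq_zero fun x hx => by
    rw [gradient_of_notMem_tsupport fun h => hx (hφ h), inner_zero_right]

namespace IsPHarmonicOn

lemma mono {Ω' : Set E} (h : IsPHarmonicOn p u Ω) (hΩ : Ω' ⊆ Ω) : IsPHarmonicOn p u Ω' where
  differentiableOn := h.differentiableOn.mono hΩ
  integral_eq_zero φ hφ hφc hφΩ := by
    rw [setIntegral_inner_gradient_eq_integral _ hφΩ,
      ← setIntegral_inner_gradient_eq_integral _ (hφΩ.trans hΩ)]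
    exact h.integral_eq_zero φ hφ hφc (hφΩ.trans hΩ)

lemma const_mul_add (h : IsPHarmonicOn p u Ω) (hΩ : IsOpen Ω) (c d : ℝ) :
    IsPHarmonicOn p (fun x => c * u x + d) Ω where
  differentiableOn := (h.differentiableOn.const_mul c).add_const d
  integral_eq_zero φ hφ hφc hφΩ := by
    have flux_eq : ∀ x ∈ Ω, ⟪pFlux p (∇ (fun y => c * u y + d) x), ∇ φ x⟫ =
        (|c| ^ (p - 2) * c) * ⟪pFlux p (∇ u x), ∇ φ x⟫ := fun x hx => by
      rw [gradient_const_mul_add (h.differentiableOn.differentiableAt (hΩ.mem_nhds hx)),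
        pFlux_smul, real_inner_smul_left]
    rw [setIntegral_congr_fun hΩ.measurableSet flux_eq, integral_const_mul,
      h.integral_eq_zero φ hφ hφc hφΩ, mul_zero]

end IsPHarmonicOn

end PHarmonic

section Convolution

lemma continuous_integral_inner_comp_add {P Q : ℝ≥0∞} [Fact (1 ≤ P)] [Fact (1 ≤ Q)]
    [Fact (P ≠ ⊤)] [HolderConjugate Q P] {F g : E → E} (hF : MemLp F Q) (hg : MemLp g P) :
    Continuous fun s => ∫ x, ⟪F x, g (x + s)⟫ := by
  have integral_eq_pairing : ∀ s, ∫ x, ⟪F x, g (x + s)⟫ =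
      (innerSL ℝ (E := E)).lpPairing volume Q P (hF.toLp F)
        (DomAddAct.mk s +ᵥ hg.toLp g) := fun s => by
    rw [DomAddAct.mk_vadd_toLp, ContinuousLinearMap.lpPairing_eq_integral]
    refine integral_congr_ae ?_
    filter_upwards [hF.coeFn_toLp, (hg.comp_measurePreserving
      (measurePreserving_vadd s volume)).coeFn_toLp] with x hFx hgx
    rw [hFx, innerSL_apply_apply, add_comm x s]
    exact congrArg (⟪F x, ·⟫) hgx.symm
  simp_rw [integral_eq_pairing]
  exact (ContinuousLinearMap.continuous _).comp
    (DomAddAct.continuous_mk.vadd continuous_const)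

variable {ρ w : E → ℝ}

lemma inner_gradient_convolution (hρ : ContDiff ℝ 1 ρ) (hρc : HasCompactSupport ρ)
    (hw : Differentiable ℝ w) (hw' : Integrable (∇ w)) (x v : E) :
    ⟪v, ∇ (ρ ⋆[ContinuousLinearMap.lsmul ℝ ℝ] w) x⟫ = ∫ t, ρ t * ⟪v, ∇ w (x - t)⟫ := by
  have hdρ : Continuous (fderiv ℝ ρ) := hρ.continuous_fderiv one_ne_zero
  have hdρc : HasCompactSupport (fderiv ℝ ρ) := hρc.fderiv ℝ
  have hwx : Differentiable ℝ fun t => w (x - t) :=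
    hw.comp ((differentiable_const x).sub differentiable_id)
  obtain ⟨C, hC⟩ := hρc.exists_bound_of_continuous hρ.continuous
  have int_left : Integrable fun t => fderiv ℝ ρ t v * w (x - t) :=
    ((hdρ.clm_apply continuous_const).mul hwx.continuous).integrable_of_hasCompactSupport
      (hdρc.comp_left (g := fun L : E →L[ℝ] ℝ => L v) rfl).mul_right
  have int_right : Integrable fun t => ρ t * ⟪v, ∇ w (x - t)⟫ :=
    ((hw'.comp_sub_left x).const_inner v).bdd_mul hρ.continuous.aestronglyMeasurable
      (Eventually.of_forall hC)
  have int_prod : Integrable fun t => ρ t * w (x - t) :=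
    (hρ.continuous.mul hwx.continuous).integrable_of_hasCompactSupport hρc.mul_right
  have by_parts := integral_mul_fderiv_eq_neg_fderiv_mul_of_integrable (μ := volume) (v := v)
    int_left (by simp_rw [fderiv_const_sub_apply hw, mul_neg]; exact int_right.neg)
    int_prod (fun t _ => hρ.differentiable one_ne_zero t) (fun t _ => hwx t)
  simp_rw [fderiv_const_sub_apply hw, mul_neg, integral_neg, neg_inj] at by_parts
  have existence : ConvolutionExistsAt (fderiv ℝ ρ) w x
      ((ContinuousLinearMap.lsmul ℝ ℝ).precompL E) volume :=
    hdρc.convolutionExists_left _ hdρ hw.continuous.locallyIntegrable x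
  rw [by_parts, real_inner_comm, inner_gradient_left,
    (hρc.hasFDerivAt_convolution_left _ hρ hw.continuous.locallyIntegrable x).fderiv, convolution,
    ContinuousLinearMap.integral_apply existence]
  simp

lemma integrable_inner_comp_sub {F g : E → E} (hρ : Continuous ρ) (hρc : HasCompactSupport ρ)
    (hF : Integrable F) (hg : Integrable g) :
    Integrable (fun y : E × E => ρ y.2 * ⟪F y.1, g (y.1 - y.2)⟫) (volume.prod volume) := by
  obtain ⟨C, hC⟩ := hρc.exists_bound_of_continuous hρ
  have shear : MeasurePreserving (fun y : E × E => (y.1, y.1 - y.2))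
      (volume.prod volume) (volume.prod volume) :=
    (MeasurePreserving.id volume).skew_product (measurable_fst.sub measurable_snd)
      (Eventually.of_forall fun x => (Measure.measurePreserving_sub_left volume x).map_eq)
  have dominated : Integrable (fun y : E × E => ‖F y.1‖ * ‖g (y.1 - y.2)‖)
      (volume.prod volume) :=
    shear.integrable_comp_of_integrable (hF.norm.mul_prod hg.norm)
  refine (dominated.const_mul C).mono' ?_ (Eventually.of_forall fun y => ?_)
  · exact (hρ.comp continuous_snd).aestronglyMeasurable.mul
      (hF.aestronglyMeasurable.comp_fst.inner
        (hg.aestronglyMeasurable.comp_snd.comp_measurePreserving shear))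
  · rw [norm_mul]
    exact mul_le_mul (hC _) (norm_inner_le_norm _ _) (norm_nonneg _)
      ((norm_nonneg _).trans (hC y.2))

lemma integral_inner_gradient_convolution (hρ : ContDiff ℝ 1 ρ) (hρc : HasCompactSupport ρ)
    (hw : Differentiable ℝ w) (hw' : Integrable (∇ w)) {F : E → E} (hF : Integrable F) :
    ∫ x, ⟪F x, ∇ (ρ ⋆[ContinuousLinearMap.lsmul ℝ ℝ] w) x⟫ =
      ∫ t, ρ t * ∫ x, ⟪F x, ∇ w (x - t)⟫ := by
  simp_rw [inner_gradient_convolution hρ hρc hw hw', ← integral_const_mul]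
  exact integral_integral_swap (integrable_inner_comp_sub hρ.continuous hρc hF hw')

end Convolution

section WeakForm

variable {w : E → ℝ}

lemma tendsto_integral_normed_mul_comp_neg {ι : Type*} {l : Filter ι}
    {B : ι → ContDiffBump (0 : E)} (hB : Tendsto (fun i => (B i).rOut) l (𝓝 0)) {h : E → ℝ}
    (hh : Continuous h) :
    Tendsto (fun i => ∫ t, (B i).normed volume t * h (-t)) l (𝓝 (h 0)) := by
  simpa [convolution] using
    ContDiffBump.convolution_tendsto_right_of_continuous (μ := volume) hB hh 0

lemma tsupport_normed_convolution_subset (B : ContDiffBump (0 : E)) (w : E → ℝ) :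
    tsupport (B.normed volume ⋆[ContinuousLinearMap.lsmul ℝ ℝ] w) ⊆
      cthickening B.rOut (tsupport w) := by
  refine closure_minimal ((support_convolution_subset _).trans ?_) isClosed_cthickening
  rw [B.support_normed_eq]
  rintro _ ⟨a, ha, b, hb, rfl⟩
  refine mem_cthickening_of_dist_le _ b _ _ (subset_tsupport _ hb) ?_
  simpa [dist_eq_norm] using (mem_ball_zero_iff.1 ha).le

lemma integrable_gradient_of_memLp {P : ℝ≥0∞} (hP : 1 ≤ P) (hwc : HasCompactSupport w)
    (hw : MemLp (∇ w) P) : Integrable (∇ w) :=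
  memLp_one_iff_integrable.1 <| hw.mono_exponent_of_measure_support_ne_top
    (fun _ => gradient_of_notMem_tsupport) hwc.measure_lt_top.ne hP

lemma integral_inner_gradient_eq_zero_of_forall_contDiff {P Q : ℝ≥0∞} [Fact (1 ≤ P)]
    [Fact (1 ≤ Q)] [Fact (P ≠ ⊤)] [HolderConjugate Q P] {F : E → E} (hF : Integrable F)
    (hFQ : MemLp F Q) (hw : Differentiable ℝ w) (hwc : HasCompactSupport w)
    (hwP : MemLp (∇ w) P) {δ : ℝ} (hδ : 0 < δ)
    (h : ∀ φ : E → ℝ, ContDiff ℝ ∞ φ → tsupport φ ⊆ cthickening δ (tsupport w) →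
      ∫ x, ⟪F x, ∇ φ x⟫ = 0) :
    ∫ x, ⟪F x, ∇ w x⟫ = 0 := by
  let B : ℕ → ContDiffBump (0 : E) := fun k =>
    ⟨δ / (k + 1) / 2, δ / (k + 1), by positivity, half_lt_self (by positivity)⟩
  have rOut_tendsto : Tendsto (fun k => (B k).rOut) atTop (𝓝 0) :=
    tendsto_const_div_atTop_nhds_zero_nat δ |>.comp (tendsto_add_atTop_nat 1) |>.congr
      fun k => by simp [B]
  have rOut_le : ∀ k, (B k).rOut ≤ δ := fun k => div_le_self hδ.le (by simp)
  have mollified_eq_zero : ∀ k, ∫ t, (B k).normed volume t * ∫ x, ⟪F x, ∇ w (x + -t)⟫ = 0 := by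
    intro k
    have smooth : ContDiff ℝ ∞ ((B k).normed volume) := (B k).contDiff_normed
    have hc : HasCompactSupport ((B k).normed volume) := (B k).hasCompactSupport_normed
    simp_rw [← sub_eq_add_neg]
    rw [← integral_inner_gradient_convolution (smooth.of_le (mod_cast le_top)) hc hw
      (integrable_gradient_of_memLp Fact.out hwc hwP) hF]
    exact h _ (hc.contDiff_convolution_left _ smooth hw.continuous.locallyIntegrable)
      ((tsupport_normed_convolution_subset (B k) w).trans (cthickening_mono (rOut_le k) _))
  have limit := tendsto_integral_normed_mul_comp_neg rOut_tendsto
    (continuous_integral_inner_comp_add hFQ hwP)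
  simp only [mollified_eq_zero, add_zero] at limit
  exact tendsto_nhds_unique limit tendsto_const_nhds

lemma memLp_pFlux {α : Type*} [MeasurableSpace α] {μ : Measure α} {g : α → E} (hp : 1 < p)
    (hg : MemLp g (.ofReal p) μ) :
    MemLp (fun x => pFlux p (g x)) (.ofReal (p / (p - 1))) μ := by
  have := hg.norm_rpow_div (.ofReal (p - 1))
  rw [← ENNReal.ofReal_div_of_pos (by linarith), toReal_ofReal (by linarith)] at this
  refine this.congr_norm (measurable_pFlux.comp_aemeasurable
    hg.aestronglyMeasurable.aemeasurable).aestronglyMeasurable (Eventually.of_forall fun x => ?_)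
  rw [norm_pFlux hp, Real.norm_of_nonneg (by positivity)]

lemma memLp_gradient_restrict (hp : 0 < p)
    (hE : LocallyIntegrableOn (fun x => ‖∇ u x‖ ^ p) Ω) {K : Set E} (hK : IsCompact K)
    (hKΩ : K ⊆ Ω) : MemLp (∇ u) (.ofReal p) (volume.restrict K) := by
  rw [← integrable_norm_rpow_iff (measurable_gradient u).aestronglyMeasurable (by simpa) (by simp),
    toReal_ofReal hp.le]
  exact hE.integrableOn_compact_subset hKΩ hK

lemma memLp_gradient_of_norm_le {P : ℝ≥0∞} {g : E → ℝ}
    (hg : MemLp g P (volume.restrict (tsupport w))) (h : ∀ x ∈ tsupport w, ‖∇ w x‖ ≤ g x) :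
    MemLp (∇ w) P := by
  have hwm : MeasurableSet (tsupport w) := (isClosed_tsupport w).measurableSet
  rw [← indicator_eq_self.2 (fun x hx => by_contra fun h => hx (gradient_of_notMem_tsupport h) :
    Function.support (∇ w) ⊆ tsupport w), memLp_indicator_iff_restrict hwm]
  refine hg.mono (measurable_gradient w).aestronglyMeasurable ?_
  filter_upwards [ae_restrict_mem hwm] with x hx
  exact (h x hx).trans (le_abs_self _)

lemma memLp_indicator_pFlux_gradient (hp : 1 < p)
    (hE : LocallyIntegrableOn (fun x => ‖∇ u x‖ ^ p) Ω) {K : Set E} (hK : IsCompact K)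
    (hKΩ : K ⊆ Ω) : MemLp (K.indicator fun x => pFlux p (∇ u x)) (.ofReal (p / (p - 1))) := by
  rw [memLp_indicator_iff_restrict hK.measurableSet]
  exact memLp_pFlux hp (memLp_gradient_restrict (by linarith) hE hK hKΩ)

lemma integrable_inner_pFlux_gradient (hp : 1 < p)
    (hE : LocallyIntegrableOn (fun x => ‖∇ u x‖ ^ p) Ω) (hwc : HasCompactSupport w)
    (hwΩ : tsupport w ⊆ Ω) (hwp : MemLp (∇ w) (.ofReal p)) :
    Integrable fun x => ⟪pFlux p (∇ u x), ∇ w x⟫ := by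
  have : HolderConjugate (.ofReal (p / (p - 1))) (.ofReal p) :=
    (Real.HolderConjugate.conjExponent hp).symm.ennrealOfReal
  refine (memLp_one_iff_integrable.1 <| (innerSL ℝ (E := E)).memLp_of_bilin 1
    (memLp_indicator_pFlux_gradient hp hE hwc hwΩ) hwp).congr (Eventually.of_forall fun x => ?_)
  by_cases hx : x ∈ tsupport w
  · simp only [indicator_of_mem hx]
    rfl
  · simp [gradient_of_notMem_tsupport hx]

lemma IsPHarmonicOn.integral_inner_pFlux_gradient_eq_zero (hp : 1 < p)
    (hu : IsPHarmonicOn p u Ω) (hΩ : IsOpen Ω)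
    (hE : LocallyIntegrableOn (fun x => ‖∇ u x‖ ^ p) Ω) (hw : Differentiable ℝ w)
    (hwc : HasCompactSupport w) (hwΩ : tsupport w ⊆ Ω) (hwp : MemLp (∇ w) (.ofReal p)) :
    ∫ x, ⟪pFlux p (∇ u x), ∇ w x⟫ = 0 := by
  obtain ⟨δ, hδ, hδΩ⟩ := hwc.isCompact.exists_cthickening_subset_open hΩ hwΩ
  set K := cthickening δ (tsupport w)
  have hK : IsCompact K := hwc.isCompact.cthickening
  set F : E → E := K.indicator fun x => pFlux p (∇ u x)
  have conj : (p / (p - 1)).HolderConjugate p := (Real.HolderConjugate.conjExponent hp).symm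
  have := conj.ennrealOfReal
  have : Fact (1 ≤ ENNReal.ofReal p) := ⟨one_le_ofReal.2 hp.le⟩
  have : Fact (1 ≤ ENNReal.ofReal (p / (p - 1))) := ⟨one_le_ofReal.2 conj.lt.le⟩
  have : Fact (ENNReal.ofReal p ≠ ⊤) := ⟨ofReal_ne_top⟩
  have hFQ : MemLp F (.ofReal (p / (p - 1))) := memLp_indicator_pFlux_gradient hp hE hK hδΩ
  have hF : Integrable F := memLp_one_iff_integrable.1 <|
    hFQ.mono_exponent_of_measure_support_ne_top (fun _ h => indicator_of_notMem h _)
      hK.measure_lt_top.ne Fact.out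
  have inner_F : ∀ {f : E → ℝ}, tsupport f ⊆ K → ∀ x,
      ⟪F x, ∇ f x⟫ = ⟪pFlux p (∇ u x), ∇ f x⟫ := fun {f} hf x => by
    by_cases hx : x ∈ K
    · simp only [F, indicator_of_mem hx]
    · rw [gradient_of_notMem_tsupport fun h => hx (hf h), inner_zero_right, inner_zero_right]
  simp_rw [← inner_F (self_subset_cthickening _)]
  refine integral_inner_gradient_eq_zero_of_forall_contDiff hF hFQ hw hwc hwp hδ fun φ hφ hφK => ?_
  simp_rw [inner_F hφK]
  rw [← setIntegral_inner_gradient_eq_integral _ (hφK.trans hδΩ)]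
  exact hu.integral_eq_zero φ hφ (hK.of_isClosed_subset (isClosed_tsupport φ) hφK)
    (hφK.trans hδΩ)

end WeakForm

section Truncation

variable {ε t : ℝ}

/-- A smooth step from `0` on `t ≤ ε` to `1` on `t ≥ 2 * ε`. -/
noncomputable def softStep (ε t : ℝ) : ℝ := Real.smoothTransition (t / ε - 1)

lemma continuous_softStep (ε : ℝ) : Continuous (softStep ε) :=
  Real.smoothTransition.continuous.comp (by fun_prop)

lemma softStep_nonneg (ε t : ℝ) : 0 ≤ softStep ε t := Real.smoothTransition.nonneg _

lemma softStep_le_one (ε t : ℝ) : softStep ε t ≤ 1 := Real.smoothTransition.le_one _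

lemma softStep_of_le (hε : 0 < ε) (ht : t ≤ ε) : softStep ε t = 0 :=
  Real.smoothTransition.zero_of_nonpos (sub_nonpos.2 ((div_le_one hε).2 ht))

lemma softStep_pos (hε : 0 < ε) (ht : ε < t) : 0 < softStep ε t :=
  Real.smoothTransition.pos_of_pos (sub_pos.2 ((one_lt_div hε).2 ht))

lemma softStep_of_two_mul_le (hε : 0 < ε) (ht : 2 * ε ≤ t) : softStep ε t = 1 :=
  Real.smoothTransition.one_of_one_le (by linarith [(le_div_iff₀ hε).2 ht])

/-- A smooth approximation of the positive part `t ↦ max t 0`, with derivative `softStep ε`. -/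
noncomputable def softPos (ε t : ℝ) : ℝ := ∫ s in 0..t, softStep ε s

lemma hasDerivAt_softPos (ε t : ℝ) : HasDerivAt (softPos ε) (softStep ε t) t :=
  (continuous_softStep ε).integral_hasStrictDerivAt 0 t |>.hasDerivAt

lemma softPos_of_le (hε : 0 < ε) (ht : t ≤ ε) : softPos ε t = 0 := by
  refine intervalIntegral.integral_zero_ae (Eventually.of_forall fun s hs => ?_)
  exact softStep_of_le hε (hs.2.trans (max_le hε.le ht))

lemma softPos_pos (hε : 0 < ε) (ht : ε < t) : 0 < softPos ε t := by
  have strictMono : StrictMonoOn (softPos ε) (Ici ε) := by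
    refine strictMonoOn_of_deriv_pos (convex_Ici ε)
      (fun s _ => (hasDerivAt_softPos ε s).continuousAt.continuousWithinAt) fun s hs => ?_
    rw [interior_Ici] at hs
    rw [(hasDerivAt_softPos ε s).deriv]
    exact softStep_pos hε hs
  simpa only [softPos_of_le hε le_rfl] using strictMono self_mem_Ici ht.le ht

end Truncation

section TruncatedExcess

variable {V : Type*} {Ω : Set V} {u v : V → ℝ} {ε : ℝ}

/-- The truncated excess `softPos ε (v - u)` of `v` over `u` on `Ω`, extended by zero. It is the
test function both of the energy estimate and of the comparison principle. -/
noncomputable def truncExcess (ε : ℝ) (u v : V → ℝ) (Ω : Set V) : V → ℝ :=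
  Ω.indicator fun x => softPos ε (v x - u x)

lemma tsupport_truncExcess_subset [TopologicalSpace V] (hε : 0 < ε)
    (hK : IsClosed {x ∈ Ω | ε ≤ v x - u x}) :
    tsupport (truncExcess ε u v Ω) ⊆ {x ∈ Ω | ε ≤ v x - u x} := by
  refine closure_minimal (fun x hx => ?_) hK
  obtain ⟨hxΩ, hx⟩ := indicator_apply_ne_zero.1 (Function.mem_support.1 hx)
  exact ⟨hxΩ, le_of_not_ge fun h => hx (softPos_of_le hε h)⟩

section Normed

variable [NormedAddCommGroup V] [NormedSpace ℝ V]

lemma hasFDerivAt_truncExcess (hΩ : IsOpen Ω) (hu : DifferentiableOn ℝ u Ω)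
    (hv : DifferentiableOn ℝ v Ω) {x : V} (hx : x ∈ Ω) :
    HasFDerivAt (truncExcess ε u v Ω)
      (softStep ε (v x - u x) • (fderiv ℝ v x - fderiv ℝ u x)) x := by
  have hxΩ := hΩ.mem_nhds hx
  refine ((hasDerivAt_softPos ε _).comp_hasFDerivAt x
    ((hv.differentiableAt hxΩ).hasFDerivAt.sub (hu.differentiableAt hxΩ).hasFDerivAt)
    ).congr_of_eventuallyEq ?_
  filter_upwards [hxΩ] with y hy
  exact indicator_of_mem hy _

lemma differentiable_truncExcess (hε : 0 < ε) (hΩ : IsOpen Ω) (hu : DifferentiableOn ℝ u Ω)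
    (hv : DifferentiableOn ℝ v Ω) (hK : IsClosed {x ∈ Ω | ε ≤ v x - u x}) :
    Differentiable ℝ (truncExcess ε u v Ω) := by
  intro x
  by_cases hx : x ∈ Ω
  · exact (hasFDerivAt_truncExcess hΩ hu hv hx).differentiableAt
  · have hxK : x ∉ tsupport (truncExcess ε u v Ω) := fun h =>
      hx (tsupport_truncExcess_subset hε hK h).1
    exact (differentiableAt_const 0).congr_of_eventuallyEq
      (notMem_tsupport_iff_eventuallyEq.1 hxK)

end Normed

section Inner

variable [NormedAddCommGroup V] [InnerProductSpace ℝ V] [CompleteSpace V]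

lemma gradient_truncExcess (hΩ : IsOpen Ω) (hu : DifferentiableOn ℝ u Ω)
    (hv : DifferentiableOn ℝ v Ω) {x : V} (hx : x ∈ Ω) :
    ∇ (truncExcess ε u v Ω) x = softStep ε (v x - u x) • (∇ v x - ∇ u x) := by
  rw [gradient, (hasFDerivAt_truncExcess hΩ hu hv hx).fderiv, map_smul, map_sub]
  rfl

lemma inner_pFlux_gradient_truncExcess_le (hp : 1 < p) (hε : 0 < ε) (hΩ : IsOpen Ω)
    (hu : DifferentiableOn ℝ u Ω) (hv : DifferentiableOn ℝ v Ω) {A : ℝ} {x : V} (hx : x ∈ Ω)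
    (hA : ‖∇ v x‖ ≤ A) :
    ⟪pFlux p (∇ u x), ∇ (truncExcess ε u v Ω) x⟫ ≤ A * (2 * A) ^ (p - 1) -
      {x ∈ Ω | 2 * ε ≤ v x - u x}.indicator (fun x => ‖∇ u x‖ ^ p) x / 2 := by
  rw [gradient_truncExcess hΩ hu hv hx]
  refine (inner_pFlux_smul_sub_le hp _ hA (softStep_nonneg ε _) (softStep_le_one ε _)).trans
    (sub_le_sub_left ?_ _)
  by_cases hxS : x ∈ {x ∈ Ω | 2 * ε ≤ v x - u x}
  · rw [indicator_of_mem hxS, softStep_of_two_mul_le hε hxS.2, one_mul]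
  · rw [indicator_of_notMem hxS, zero_div]
    exact mul_nonneg (softStep_nonneg _ _) (by positivity)

end Inner

lemma memLp_gradient_truncExcess {Ω : Set E} {u v : E → ℝ} (hp : 1 ≤ p) (hε : 0 < ε) (hΩ : IsOpen Ω)
    (hu : DifferentiableOn ℝ u Ω) (hv : DifferentiableOn ℝ v Ω)
    (huE : LocallyIntegrableOn (fun x => ‖∇ u x‖ ^ p) Ω)
    (hvE : LocallyIntegrableOn (fun x => ‖∇ v x‖ ^ p) Ω)
    (hK : IsCompact {x ∈ Ω | ε ≤ v x - u x}) :
    MemLp (∇ (truncExcess ε u v Ω)) (.ofReal p) := by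
  have supp_subset := tsupport_truncExcess_subset hε hK.isClosed
  have hc := hK.of_isClosed_subset (isClosed_tsupport _) supp_subset
  have supp_Ω := supp_subset.trans (sep_subset Ω _)
  refine memLp_gradient_of_norm_le
    ((memLp_gradient_restrict (by linarith) hvE hc supp_Ω).norm.add
      (memLp_gradient_restrict (by linarith) huE hc supp_Ω).norm) fun x hx => ?_
  rw [gradient_truncExcess hΩ hu hv (supp_Ω hx), norm_smul,
    Real.norm_of_nonneg (softStep_nonneg _ _)]
  exact (mul_le_of_le_one_left (norm_nonneg _) (softStep_le_one _ _)).trans (norm_sub_le _ _)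

end TruncatedExcess

section EnergyEstimate

variable {ψ : E → ℝ} {A ε : ℝ}

lemma locallyIntegrableOn_norm_gradient_rpow_of_norm_le (hp : 0 ≤ p) (hΩ : MeasurableSet Ω)
    (h : ∀ x ∈ Ω, ‖∇ u x‖ ≤ A) : LocallyIntegrableOn (fun x => ‖∇ u x‖ ^ p) Ω := by
  intro x _
  have finite : volume (Ω ∩ ball x 1) ≠ ⊤ :=
    (measure_mono inter_subset_right).trans_lt measure_ball_lt_top |>.ne
  refine ⟨Ω ∩ ball x 1, inter_mem_nhdsWithin Ω (ball_mem_nhds x one_pos),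
    Measure.integrableOn_of_bounded (M := A ^ p) finite
      ((measurable_gradient u).norm.pow_const p).aestronglyMeasurable ?_⟩
  filter_upwards [ae_restrict_mem (hΩ.inter measurableSet_ball)] with y hy
  rw [Real.norm_of_nonneg (by positivity)]
  exact Real.rpow_le_rpow (norm_nonneg _) (h y hy.1) hp

lemma IsPHarmonicOn.setIntegral_norm_gradient_rpow_le (hp : 1 < p) (hu : IsPHarmonicOn p u Ω)
    (hΩ : IsOpen Ω) (huE : LocallyIntegrableOn (fun x => ‖∇ u x‖ ^ p) Ω)
    (hψ : DifferentiableOn ℝ ψ Ω) (hψA : ∀ x ∈ Ω, ‖∇ ψ x‖ ≤ A) (hε : 0 < ε)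
    (hK : IsCompact {x ∈ Ω | ε ≤ ψ x - u x}) :
    ∫ x in {x ∈ Ω | 2 * ε ≤ ψ x - u x}, ‖∇ u x‖ ^ p ≤
      2 * (A * (2 * A) ^ (p - 1)) * volume.real {x ∈ Ω | ε ≤ ψ x - u x} := by
  set K := {x ∈ Ω | ε ≤ ψ x - u x}
  set S := {x ∈ Ω | 2 * ε ≤ ψ x - u x}
  set w := truncExcess ε u ψ Ω
  have hKΩ : K ⊆ Ω := sep_subset Ω _
  have hSK : S ⊆ K := fun x hx => ⟨hx.1, by linarith [hx.2]⟩
  have hS : MeasurableSet S := by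
    have hS_eq : S = K ∩ (fun x => ψ x - u x) ⁻¹' Ici (2 * ε) :=
      Subset.antisymm (fun x hx => ⟨hSK hx, hx.2⟩) fun x hx => ⟨hx.1.1, hx.2⟩
    rw [hS_eq]
    exact ((hψ.sub hu.differentiableOn).continuousOn.mono hKΩ).preimage_isClosed_of_isClosed
      hK.isClosed isClosed_Ici |>.measurableSet
  have hwK : tsupport w ⊆ K := tsupport_truncExcess_subset hε hK.isClosed
  have hwc : HasCompactSupport w := hK.of_isClosed_subset (isClosed_tsupport w) hwK
  have hwp : MemLp (∇ w) (.ofReal p) := memLp_gradient_truncExcess hp.le hε hΩ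
    hu.differentiableOn hψ huE
    (locallyIntegrableOn_norm_gradient_rpow_of_norm_le (by linarith) hΩ.measurableSet hψA) hK
  have tested : ∫ x in K, ⟪pFlux p (∇ u x), ∇ w x⟫ = 0 := by
    rw [setIntegral_inner_gradient_eq_integral _ hwK]
    exact hu.integral_inner_pFlux_gradient_eq_zero hp hΩ huE
      (differentiable_truncExcess hε hΩ hu.differentiableOn hψ hK.isClosed) hwc (hwK.trans hKΩ) hwp
  have int_inner := integrable_inner_pFlux_gradient hp huE hwc (hwK.trans hKΩ) hwp
  have int_energy : IntegrableOn (S.indicator fun x => ‖∇ u x‖ ^ p) K :=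
    (huE.integrableOn_compact_subset hKΩ hK).indicator hS
  have int_const : IntegrableOn (fun _ : E => A * (2 * A) ^ (p - 1)) K :=
    integrableOn_const hK.measure_lt_top.ne
  have integrated := setIntegral_mono_on int_inner.integrableOn
    (int_const.sub (int_energy.div_const 2)) hK.measurableSet fun x hx =>
      inner_pFlux_gradient_truncExcess_le hp hε hΩ hu.differentiableOn hψ hx.1 (hψA x hx.1)
  simp only [Pi.sub_apply] at integrated
  rw [tested, integral_sub int_const (int_energy.div_const 2),
    setIntegral_const, integral_div, setIntegral_indicator hS, inter_eq_right.2 hSK,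
    smul_eq_mul] at integrated
  linarith

end EnergyEstimate

section Rigidity

lemma eq_zero_of_gradient_ae_eq_zero [Nontrivial E] {w : E → ℝ} (hw : Differentiable ℝ w)
    (hwc : HasCompactSupport w) (h : ∇ w =ᵐ[volume] 0) : w = 0 := by
  obtain ⟨e, he⟩ := exists_ne (0 : E)
  have fderiv_sq : ∀ᵐ x, fderiv ℝ (fun y => w y ^ 2) x e = 0 := by
    filter_upwards [h] with x hx
    have : fderiv ℝ w x = 0 := norm_eq_zero.1 <| by
      rw [← norm_gradient, hx, Pi.zero_apply, norm_zero]
    rw [((hw x).hasFDerivAt.pow 2).fderiv, this, smul_zero, zero_apply]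
  have hsqc : HasCompactSupport fun y => w y ^ 2 := hwc.comp_left (g := fun t => t ^ 2) (by simp)
  have hsq : Continuous fun y => w y ^ 2 := hw.continuous.pow 2
  have fderiv_inner : ∀ x, fderiv ℝ (innerSL ℝ e) x e = ‖e‖ ^ 2 := fun x => by
    rw [ContinuousLinearMap.fderiv, innerSL_apply_apply, real_inner_self_eq_norm_sq]
  have integral_sq : ∫ x, w x ^ 2 = 0 := by
    have by_parts := integral_mul_fderiv_eq_neg_fderiv_mul_of_integrable (μ := volume) (v := e)
      (f := innerSL ℝ e) (g := fun y => w y ^ 2)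
      (by simpa only [fderiv_inner] using
        (hsq.integrable_of_hasCompactSupport hsqc).const_mul (‖e‖ ^ 2))
      ((integrable_zero _ _ _).congr (by filter_upwards [fderiv_sq] with x hx; simp [hx]))
      (((innerSL ℝ e).continuous.mul hsq).integrable_of_hasCompactSupport hsqc.mul_left)
      (fun x _ => (innerSL ℝ e).differentiableAt) (fun x _ => (hw x).pow 2)
    rw [integral_eq_zero_of_ae (by filter_upwards [fderiv_sq] with x hx; simp [hx]),
      zero_eq_neg] at by_parts
    simpa only [fderiv_inner, integral_const_mul, mul_eq_zero, pow_eq_zero_iff two_ne_zero,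
      norm_eq_zero, he, false_or] using by_parts
  ext x
  by_contra hx
  exact (hsq.integral_pos_of_hasCompactSupport_nonneg_nonzero hsqc (fun y => sq_nonneg (w y))
    (pow_ne_zero 2 hx)).ne' integral_sq

end Rigidity

section Mollification

lemma lipschitzWith_normed_convolution {C : NNReal} {g : E → ℝ} (hg : LipschitzWith C g)
    (B : ContDiffBump (0 : E)) :
    LipschitzWith C (B.normed volume ⋆[ContinuousLinearMap.lsmul ℝ ℝ] g) := by
  refine LipschitzWith.of_dist_le_mul fun x y => ?_
  have integrable_translate : ∀ x, Integrable fun t => B.normed volume t * g (x - t) := fun x =>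
    (B.contDiff_normed (n := 0)).continuous.mul (hg.continuous.comp (by fun_prop))
      |>.integrable_of_hasCompactSupport B.hasCompactSupport_normed.mul_right
  calc dist _ _ = ‖∫ t, B.normed volume t * (g (x - t) - g (y - t))‖ := by
        simp_rw [mul_sub]
        rw [integral_sub (integrable_translate x) (integrable_translate y), dist_eq_norm]
        rfl
    _ ≤ ∫ t, B.normed volume t * (C * dist x y) := by
        refine norm_integral_le_of_norm_le (B.integrable_normed.mul_const _)
          (Eventually.of_forall fun t => ?_)
        rw [norm_mul, Real.norm_of_nonneg (B.nonneg_normed t), ← dist_eq_norm]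
        refine mul_le_mul_of_nonneg_left ?_ (B.nonneg_normed t)
        simpa only [dist_sub_right] using hg.dist_le_mul (x - t) (y - t)
    _ = C * dist x y := by rw [integral_mul_const, B.integral_normed, one_mul]

lemma exists_differentiable_dist_le_of_lipschitzWith {C : NNReal} {g : E → ℝ}
    (hg : LipschitzWith C g) {δ : ℝ} (hδ : 0 < δ) :
    ∃ ψ : E → ℝ, Differentiable ℝ ψ ∧ LipschitzWith C ψ ∧ ∀ x, dist (ψ x) (g x) ≤ δ := by
  have hr : 0 < δ / (C + 1) := by positivity
  let B : ContDiffBump (0 : E) := ⟨δ / (C + 1) / 2, δ / (C + 1), half_pos hr, half_lt_self hr⟩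
  refine ⟨_, (B.hasCompactSupport_normed.contDiff_convolution_left (μ := volume) (n := 1)
    (ContinuousLinearMap.lsmul ℝ ℝ) B.contDiff_normed
      hg.continuous.locallyIntegrable).differentiable
    one_ne_zero, lipschitzWith_normed_convolution hg B, fun x => ?_⟩
  refine B.dist_normed_convolution_le hg.continuous.aestronglyMeasurable fun y hy => ?_
  calc dist (g y) (g x) ≤ C * (δ / (C + 1)) :=
        (hg.dist_le_mul y x).trans (mul_le_mul_of_nonneg_left (mem_ball.1 hy).le C.2)
    _ ≤ (C + 1) * (δ / (C + 1)) := by gcongr; linarith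
    _ = δ := by field_simp

end Mollification

section Contact

lemma integrableOn_setOf_pos_of_forall_setIntegral_le {α : Type*} [MeasurableSpace α]
    {μ : Measure α} {d h : α → ℝ} {Z : Set α} {I : ℝ} (hh : ∀ x, 0 ≤ h x)
    (hd : ∀ t > 0, MeasurableSet {x ∈ Z | t ≤ d x})
    (hint : ∀ t > 0, IntegrableOn h {x ∈ Z | t ≤ d x} μ)
    (hle : ∀ t > 0, ∫ x in {x ∈ Z | t ≤ d x}, h x ∂μ ≤ I) :
    IntegrableOn h {x ∈ Z | 0 < d x} μ := by
  have pos (k : ℕ) : (0 : ℝ) < 1 / (k + 1) := Nat.one_div_pos_of_nat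
  have restrict_eq (k : ℕ) : (μ.restrict {x ∈ Z | 0 < d x}).restrict {x ∈ Z | 1 / (k + 1) ≤ d x} =
      μ.restrict {x ∈ Z | 1 / (k + 1) ≤ d x} := by
    rw [Measure.restrict_restrict (hd _ (pos k)), inter_eq_left.2]
    exact fun x hx => ⟨hx.1, (pos k).trans_le hx.2⟩
  have measurable_pos : MeasurableSet {x ∈ Z | 0 < d x} := by
    have : {x ∈ Z | 0 < d x} = ⋃ k : ℕ, {x ∈ Z | 1 / ((k : ℝ) + 1) ≤ d x} := by
      ext x
      simp only [mem_ofPred_eq, mem_iUnion, exists_and_left]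
      refine and_congr_right fun _ => ⟨fun hx => ?_, fun ⟨k, hk⟩ => (pos k).trans_le hk⟩
      exact (exists_nat_one_div_lt hx).imp fun k hk => hk.le
    rw [this]
    exact .iUnion fun k => hd _ (pos k)
  have cover : AECover (μ.restrict {x ∈ Z | 0 < d x}) atTop
      fun k : ℕ => {x ∈ Z | 1 / ((k : ℝ) + 1) ≤ d x} := by
    refine ⟨?_, fun k => hd _ (pos k)⟩
    filter_upwards [ae_restrict_mem measurable_pos] with x hx
    filter_upwards [tendsto_one_div_add_atTop_nhds_zero_nat.eventually_le_const hx.2] with k hk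
    exact ⟨hx.1, hk⟩
  refine cover.integrable_of_integral_norm_bounded I (fun k => ?_)
    (Eventually.of_forall fun k => ?_)
  · rw [IntegrableOn, restrict_eq]
    exact hint _ (pos k)
  · simp_rw [restrict_eq, Real.norm_of_nonneg (hh _)]
    exact hle _ (pos k)

lemma IsPHarmonicOn.integrableOn_norm_gradient_rpow_setOf_lt (hp : 1 < p)
    (hu : IsPHarmonicOn p u Ω) (hΩ : IsOpen Ω)
    (huE : LocallyIntegrableOn (fun x => ‖∇ u x‖ ^ p) Ω) {Z : Set E} (hZ : IsCompact Z)
    (hΩZ : Ω ⊆ Z) (huZ : ContinuousOn u Z) {C : NNReal} {L : E → ℝ} (hL : LipschitzWith C L)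
    (hLΩ : {x ∈ Z | u x < L x} ⊆ Ω) :
    IntegrableOn (fun x => ‖∇ u x‖ ^ p) {x ∈ Z | u x < L x} := by
  have isClosed_superlevel : ∀ {ψ : E → ℝ}, Continuous ψ → ∀ t, IsClosed {x ∈ Z | t ≤ ψ x - u x} :=
    fun hψ t => (hψ.continuousOn.sub huZ).preimage_isClosed_of_isClosed hZ.isClosed isClosed_Ici
  have superlevel_subset : ∀ t > 0, {x ∈ Z | t ≤ L x - u x} ⊆ Ω := fun t ht x hx =>
    hLΩ ⟨hx.1, by linarith [hx.2]⟩
  have hint : ∀ t > 0, IntegrableOn (fun x => ‖∇ u x‖ ^ p) {x ∈ Z | t ≤ L x - u x} := fun t ht =>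
    huE.integrableOn_compact_subset (superlevel_subset t ht)
      (hZ.of_isClosed_subset (isClosed_superlevel hL.continuous t) (sep_subset Z _))
  simp only [← sub_pos (b := u _)]
  refine integrableOn_setOf_pos_of_forall_setIntegral_le
    (I := 2 * (C * (2 * C) ^ (p - 1)) * volume.real Z) (fun x => by positivity)
    (fun t _ => (isClosed_superlevel hL.continuous t).measurableSet) hint fun t ht => ?_
  obtain ⟨ψ, hψ, hψC, hψL⟩ :=
    exists_differentiable_dist_le_of_lipschitzWith hL (δ := t / 6) (by positivity)
  have close : ∀ x, |ψ x - L x| ≤ t / 6 := hψL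
  have excess_eq : {x ∈ Ω | t / 3 ≤ ψ x - u x} = {x ∈ Z | t / 3 ≤ ψ x - u x} :=
    Subset.antisymm (fun x hx => ⟨hΩZ hx.1, hx.2⟩) fun x hx =>
      ⟨hLΩ ⟨hx.1, by linarith [hx.2, (abs_le.1 (close x)).2]⟩, hx.2⟩
  have excess_compact : IsCompact {x ∈ Ω | t / 3 ≤ ψ x - u x} := by
    rw [excess_eq]
    exact hZ.of_isClosed_subset (isClosed_superlevel hψ.continuous _) (sep_subset Z _)
  calc ∫ x in {x ∈ Z | t ≤ L x - u x}, ‖∇ u x‖ ^ p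
      ≤ ∫ x in {x ∈ Ω | 2 * (t / 3) ≤ ψ x - u x}, ‖∇ u x‖ ^ p := by
        refine setIntegral_mono_set
          ((huE.integrableOn_compact_subset (sep_subset Ω _) excess_compact).mono_set
            fun x hx => ⟨hx.1, by linarith [hx.2]⟩)
          (Eventually.of_forall fun x => by positivity)
          (LE.le.eventuallyLE fun x hx => ⟨superlevel_subset t ht hx, ?_⟩)
        linarith [hx.2, (abs_le.1 (close x)).1]
    _ ≤ 2 * (C * (2 * C) ^ (p - 1)) * volume.real {x ∈ Ω | t / 3 ≤ ψ x - u x} :=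
        hu.setIntegral_norm_gradient_rpow_le hp hΩ huE hψ.differentiableOn
          (fun x _ => (norm_gradient ψ x).trans_le (norm_fderiv_le_of_lipschitz ℝ hψC))
          (by positivity) excess_compact
    _ ≤ 2 * (C * (2 * C) ^ (p - 1)) * volume.real Z := by
        gcongr
        · exact hZ.measure_lt_top.ne
        · exact (sep_subset Ω _).trans hΩZ

end Contact

section Barrier

variable {X : Type*} [PseudoMetricSpace X] {S : Set X}

lemma isClosed_setOf_forall_dist_le_mul_dist {Y : Type*} [PseudoMetricSpace Y] {f : X → Y}
    (hf : Continuous (S.domRestrict f)) (k r : ℝ) :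
    IsClosed {s : S | ∀ x : X, dist x s < r → dist (f x) (f s) ≤ k * dist x s} := by
  simp only [ofPred_forall]
  refine isClosed_iInter fun x => isClosed_imp ?_ ?_
  · exact isOpen_lt (by fun_prop) continuous_const
  · exact isClosed_le (continuous_const.dist hf) (by fun_prop)

lemma exists_ball_dist_le_mul_dist_of_isBigO {Y : Type*} [PseudoMetricSpace Y] {f : X → Y}
    [BaireSpace S] (hS : S.Nonempty)
    (hf : ∀ s ∈ S, ∃ C : ℝ, ∀ᶠ x in 𝓝 s, dist (f x) (f s) ≤ C * dist x s) :
    ∃ k : NNReal, ∃ s₀ ∈ S, ∃ R > 0, ∀ s ∈ S ∩ ball s₀ R, ∀ x ∈ ball s₀ R,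
      dist (f x) (f s) ≤ k * dist x s := by
  have continuous_domRestrict : Continuous (S.domRestrict f) := by
    refine continuous_iff_continuousAt.2 fun s => ?_
    obtain ⟨C, hC⟩ := hf s s.2
    refine ContinuousAt.comp_of_eq (y := (s : X)) ?_ continuousAt_subtype_val rfl
    refine tendsto_iff_dist_tendsto_zero.2
      (squeeze_zero' (Eventually.of_forall fun _ => dist_nonneg) hC ?_)
    simpa using (tendsto_iff_dist_tendsto_zero.1 (tendsto_id (x := 𝓝 (s : X)))).const_mul C
  let F (k : ℕ) : Set S :=
    {s | ∀ x : X, dist x s < 1 / ((k : ℝ) + 1) → dist (f x) (f s) ≤ k * dist x s}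
  have isClosed_F (k : ℕ) : IsClosed (F k) :=
    isClosed_setOf_forall_dist_le_mul_dist continuous_domRestrict _ _
  have iUnion_F : ⋃ k, F k = univ := by
    refine eq_univ_of_forall fun s => mem_iUnion.2 ?_
    obtain ⟨C, hC⟩ := hf s s.2
    obtain ⟨r, hr, hrC⟩ := Metric.eventually_nhds_iff.1 hC
    obtain ⟨k, hkC, hkr⟩ := ((eventually_ge_atTop ⌈C⌉₊).and
      (tendsto_one_div_add_atTop_nhds_zero_nat.eventually_le_const hr)).exists
    refine ⟨k, fun x hx => (hrC (hx.trans_le hkr)).trans ?_⟩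
    gcongr
    exact Nat.ceil_le.1 hkC
  have : Nonempty S := hS.to_subtype
  obtain ⟨k, s₀, hs₀⟩ := nonempty_interior_of_iUnion_of_closed isClosed_F iUnion_F
  obtain ⟨ρ, hρ, hρF⟩ := Metric.mem_nhds_iff.1 (mem_interior_iff_mem_nhds.1 hs₀)
  refine ⟨k, s₀, s₀.2, min ρ (1 / (k + 1) / 2), by positivity, fun s hs x hx => ?_⟩
  have hx' := (mem_ball.1 hx).trans_le (min_le_right _ _)
  have hs' := (mem_ball'.1 hs.2).trans_le (min_le_right _ _)
  exact hρF (a := ⟨s, hs.1⟩) ((mem_ball.1 hs.2).trans_le (min_le_left _ _)) x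
    (by linarith [dist_triangle x s₀ s])

lemma exists_lipschitzWith_eqOn_add_infDist_le {f : X → ℝ} {k : NNReal} {T U : Set X}
    (hT : T.Nonempty) (hTU : T ⊆ U)
    (hf : ∀ s ∈ T, ∀ x ∈ U, dist (f x) (f s) ≤ k * dist x s) :
    ∃ L : X → ℝ, LipschitzWith (3 * k + 1) L ∧ EqOn L f T ∧
      ∀ x ∈ U, f x + infDist x T ≤ L x := by
  obtain ⟨g, hg, hgf⟩ := LipschitzOnWith.extend_real
    (LipschitzOnWith.of_dist_le_mul fun s hs t ht => hf t ht s (hTU hs) : LipschitzOnWith k f T)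
  refine ⟨fun x => g x + (2 * k + 1) * infDist x T, ?_, fun s hs => ?_, fun x hx => ?_⟩
  · refine LipschitzWith.of_le_add_mul _ fun x y => ?_
    push_cast
    have := hg.le_add_mul x y
    have := mul_le_mul_of_nonneg_left (infDist_le_infDist_add_dist (s := T) (x := x) (y := y))
      (by positivity : 0 ≤ 2 * (k : ℝ) + 1)
    linarith
  · simp only [infDist_zero_of_mem hs, mul_zero, add_zero, hgf hs]
  · have : f x - g x ≤ 2 * k * infDist x T := by
      rw [infDist_eq_iInf, Real.mul_iInf_of_nonneg (by positivity)]
      have := hT.to_subtype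
      refine le_ciInf fun s => ?_
      have := (abs_le.1 (hf s s.2 x hx)).2
      have := hg.le_add_mul s x
      rw [dist_comm, ← hgf s.2] at this
      linarith
    linarith

lemma exists_lipschitzWith_barrier {f : X → ℝ} {k : NNReal} {s₀ : X} {R : ℝ} (hs₀ : s₀ ∈ S)
    (hR : 0 < R) (hf : ∀ s ∈ S ∩ ball s₀ R, ∀ x ∈ ball s₀ R, dist (f x) (f s) ≤ k * dist x s) :
    ∃ (C : NNReal) (L : X → ℝ), LipschitzWith C L ∧ (∀ s ∈ S ∩ ball s₀ R, L s ≤ f s) ∧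
      (∀ x ∈ sphere s₀ (R / 2), L x ≤ f x) ∧ ∀ x ∈ ball s₀ (R / 4) \ closure S, f x < L x := by
  have hs₀T : s₀ ∈ S ∩ ball s₀ R := ⟨hs₀, mem_ball_self hR⟩
  obtain ⟨g, hg, hgf, hfg⟩ :=
    exists_lipschitzWith_eqOn_add_infDist_le ⟨s₀, hs₀T⟩ inter_subset_right hf
  set M : NNReal := 2 * (4 * k + 1) with hM
  refine ⟨3 * k + 1 + M, fun x => g x - M * max 0 (dist x s₀ - R / 4), ?_, fun s hs => ?_,
    fun x hx => ?_, fun x ⟨hx, hxS⟩ => ?_⟩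
  · refine LipschitzWith.of_le_add_mul _ fun x y => ?_
    have := hg.le_add_mul x y
    have cutoff_le : max 0 (dist y s₀ - R / 4) ≤ max 0 (dist x s₀ - R / 4) + dist x y :=
      max_le (by positivity) (by
        linarith [le_max_right 0 (dist x s₀ - R / 4), dist_triangle_left y s₀ x])
    have := mul_le_mul_of_nonneg_left cutoff_le M.coe_nonneg
    push_cast at *
    linarith
  · exact (sub_le_self _ (by positivity)).trans_eq (hgf hs)
  · have hxR : dist x s₀ = R / 2 := hx
    have hx_ball : x ∈ ball s₀ R := mem_ball.2 (by linarith)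
    beta_reduce
    have := hg.le_add_mul x s₀
    have := (abs_le.1 (hf s₀ hs₀T x hx_ball)).1
    rw [max_eq_right (by linarith : 0 ≤ dist x s₀ - R / 4)]
    rw [hgf hs₀T] at *
    simp only [hxR, hM, NNReal.coe_add, NNReal.coe_mul, NNReal.coe_one, NNReal.coe_ofNat] at *
    linarith
  · have hxR : dist x s₀ < R / 4 := hx
    have infDist_pos : 0 < infDist x (S ∩ ball s₀ R) :=
      infDist_nonneg.lt_of_ne' fun h => hxS <| closure_mono inter_subset_left <|
        (mem_closure_iff_infDist_zero ⟨s₀, hs₀T⟩).2 h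
    beta_reduce
    have := hfg x (mem_ball.2 (by linarith))
    rw [max_eq_left (by linarith : dist x s₀ - R / 4 ≤ 0)]
    linarith

end Barrier

section LocalEnergy

/-- The points near which the `p`-energy density `‖∇ u‖ ^ p` is integrable. -/
def finiteEnergySet (p : ℝ) (u : E → ℝ) : Set E :=
  {x | IntegrableAtFilter (fun y => ‖∇ u y‖ ^ p) (𝓝 x)}

lemma isOpen_finiteEnergySet (p : ℝ) (u : E → ℝ) : IsOpen (finiteEnergySet p u) := by
  refine isOpen_iff_mem_nhds.2 fun x ⟨s, hs, hint⟩ => ?_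
  filter_upwards [eventually_mem_nhds_iff.2 hs] with y hy
  exact ⟨s, hy, hint⟩

lemma integrableOn_norm_gradient_rpow_of_dist_le {S : Set E} {k : NNReal} (hp : 0 ≤ p)
    (hS : MeasurableSet S) (hSfin : volume S ≠ ⊤)
    (hu : ∀ s ∈ S, ∀ᶠ x in 𝓝 s, dist (u x) (u s) ≤ k * dist x s) :
    IntegrableOn (fun x => ‖∇ u x‖ ^ p) S := by
  refine Measure.integrableOn_of_bounded (M := (k : ℝ) ^ p) hSfin
    ((measurable_gradient u).norm.pow_const p).aestronglyMeasurable ?_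
  filter_upwards [ae_restrict_mem hS] with s hs
  rw [Real.norm_of_nonneg (by positivity), norm_gradient]
  gcongr
  exact norm_fderiv_le_of_lip' ℝ k.2 (by simpa only [dist_eq_norm] using hu s hs)

lemma IsPHarmonicOn.integrableOn_norm_gradient_rpow_closedBall_setOf_lt {L : E → ℝ} {C : NNReal}
    {s₀ : E} {ρ : ℝ} (hp : 1 < p) (hu : IsPHarmonicOn p u Ω) (hρΩ : closedBall s₀ ρ ⊆ Ω)
    (hL : LipschitzWith C L) (hLE : ∀ x ∈ closedBall s₀ ρ \ finiteEnergySet p u, L x ≤ u x)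
    (hL_sphere : ∀ x ∈ sphere s₀ ρ, L x ≤ u x) :
    IntegrableOn (fun x => ‖∇ u x‖ ^ p) {x ∈ closedBall s₀ ρ | u x < L x} := by
  have hu_inter : IsPHarmonicOn p u (ball s₀ ρ ∩ finiteEnergySet p u) :=
    hu.mono fun x hx => hρΩ (ball_subset_closedBall hx.1)
  refine hu_inter.integrableOn_norm_gradient_rpow_setOf_lt hp
    (isOpen_ball.inter (isOpen_finiteEnergySet p u))
    (fun x hx => hx.2.filter_mono nhdsWithin_le_nhds) (isCompact_closedBall s₀ ρ)
    (inter_subset_left.trans ball_subset_closedBall)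
    (hu.differentiableOn.continuousOn.mono hρΩ) hL fun x ⟨hx, huL⟩ => ⟨?_, ?_⟩
  · exact lt_of_le_of_ne hx fun h => huL.not_ge (hL_sphere x h)
  · by_contra hxE
    exact huL.not_ge (hLE x ⟨hx, hxE⟩)

lemma IsPHarmonicOn.subset_finiteEnergySet (hp : 1 < p) (hu : IsPHarmonicOn p u Ω)
    (hΩ : IsOpen Ω) : Ω ⊆ finiteEnergySet p u := by
  by_contra hΩE
  set S := Ω \ finiteEnergySet p u
  have hE := isOpen_finiteEnergySet p u
  have : LocallyCompactSpace S :=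
    (hΩ.isLocallyClosed.inter hE.isClosed_compl.isLocallyClosed).locallyCompactSpace
  obtain ⟨k, s₀, hs₀, R₀, hR₀, hk⟩ := exists_ball_dist_le_mul_dist_of_isBigO (S := S) (f := u)
    (nonempty_of_not_subset hΩE) fun s hs => by
      simpa only [dist_eq_norm] using
        ((hu.differentiableOn.differentiableAt (hΩ.mem_nhds hs.1)).isBigO_sub).bound
  obtain ⟨R, hR, hRΩ⟩ : ∃ R > 0, ball s₀ R ⊆ Ω ∩ ball s₀ R₀ :=
    Metric.mem_nhds_iff.1 (inter_mem (hΩ.mem_nhds hs₀.1) (ball_mem_nhds s₀ hR₀))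
  have hkR : ∀ s ∈ S ∩ ball s₀ R, ∀ x ∈ ball s₀ R, dist (u x) (u s) ≤ k * dist x s :=
    fun s hs x hx => hk s ⟨hs.1, (hRΩ hs.2).2⟩ x (hRΩ hx).2
  obtain ⟨C, L, hL, hLS, hL_sphere, hL_ball⟩ := exists_lipschitzWith_barrier hs₀ hR hkR
  have closedBall_subset : closedBall s₀ (R / 2) ⊆ ball s₀ R :=
    closedBall_subset_ball (by linarith)
  have ball_subset : ball s₀ (R / 4) ⊆ closedBall s₀ (R / 2) :=
    ball_subset_closedBall.trans (closedBall_subset_closedBall (by linarith))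
  have energy_contact := hu.integrableOn_norm_gradient_rpow_closedBall_setOf_lt hp
    (closedBall_subset.trans fun x hx => (hRΩ hx).1) hL
    (fun s hs => hLS s ⟨⟨(hRΩ (closedBall_subset hs.1)).1, hs.2⟩, closedBall_subset hs.1⟩) hL_sphere
  have energy_S : IntegrableOn (fun x => ‖∇ u x‖ ^ p) (S ∩ ball s₀ R) :=
    integrableOn_norm_gradient_rpow_of_dist_le (by linarith)
      ((hΩ.measurableSet.diff hE.measurableSet).inter measurableSet_ball)
      ((measure_mono inter_subset_right).trans_lt measure_ball_lt_top).ne fun s hs => by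
        filter_upwards [isOpen_ball.mem_nhds hs.2] with x hx using hkR s hs x hx
  refine hs₀.2 ⟨ball s₀ (R / 4), ball_mem_nhds s₀ (by positivity),
    (energy_contact.union energy_S).mono_set fun x hx => ?_⟩
  have hxR := closedBall_subset (ball_subset hx)
  by_cases hxS : x ∈ S
  · exact .inr ⟨hxS, hxR⟩
  · refine .inl ⟨ball_subset hx, hL_ball x ⟨hx, fun hxS' => hxS ⟨(hRΩ hxR).1, ?_⟩⟩⟩
    exact closure_minimal (fun y hy => hy.2) hE.isClosed_compl hxS'

lemma IsPHarmonicOn.locallyIntegrableOn_norm_gradient_rpow (hp : 1 < p)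
    (hu : IsPHarmonicOn p u Ω) (hΩ : IsOpen Ω) :
    LocallyIntegrableOn (fun x => ‖∇ u x‖ ^ p) Ω := fun _ hx =>
  (hu.subset_finiteEnergySet hp hΩ hx).filter_mono nhdsWithin_le_nhds

end LocalEnergy

section Comparison

variable {v : E → ℝ} {ε : ℝ}

lemma isCompact_setOf_le_sub {X : Type*} [PseudoMetricSpace X] [ProperSpace X] {Ω : Set X}
    {u v : X → ℝ} (hΩ : IsOpen Ω) (hΩb : Bornology.IsBounded Ω)
    (hu : ContinuousOn u Ω) (hv : ContinuousOn v Ω)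
    (h : ∀ y ∈ frontier Ω, ∀ᶠ x in 𝓝[Ω] y, v x < u x + ε) :
    IsCompact {x ∈ Ω | ε ≤ v x - u x} := by
  refine isCompact_of_isClosed_isBounded (isClosed_of_closure_subset fun x hx => ?_)
    (hΩb.subset (sep_subset Ω _))
  by_cases hxΩ : x ∈ Ω
  · refine ⟨hxΩ, ?_⟩
    have continuousAt_sub : ContinuousAt (fun y => v y - u y) x :=
      (hv.sub hu).continuousAt (hΩ.mem_nhds hxΩ)
    exact ge_of_tendsto_of_frequently continuousAt_sub
      ((mem_closure_iff_frequently.1 hx).mono fun y hy => hy.2)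
  · have hx_frontier : x ∈ frontier Ω := by
      rw [hΩ.frontier_eq]
      exact ⟨closure_mono (sep_subset Ω _) hx, hxΩ⟩
    obtain ⟨y, hy, hyΩ⟩ := ((mem_closure_iff_frequently.1 hx).and_eventually
      (eventually_nhdsWithin_iff.1 (h x hx_frontier))).exists
    linarith [hyΩ hy.1, hy.2]

lemma IsPHarmonicOn.integral_inner_pFlux_sub_pFlux_eq_zero {w : E → ℝ} (hp : 1 < p)
    (hΩ : IsOpen Ω) (hu : IsPHarmonicOn p u Ω) (hv : IsPHarmonicOn p v Ω) (hw : Differentiable ℝ w)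
    (hwc : HasCompactSupport w) (hwΩ : tsupport w ⊆ Ω) (hwp : MemLp (∇ w) (.ofReal p)) :
    Integrable (fun x => ⟪pFlux p (∇ v x) - pFlux p (∇ u x), ∇ w x⟫) ∧
      ∫ x, ⟪pFlux p (∇ v x) - pFlux p (∇ u x), ∇ w x⟫ = 0 := by
  have huE := hu.locallyIntegrableOn_norm_gradient_rpow hp hΩ
  have hvE := hv.locallyIntegrableOn_norm_gradient_rpow hp hΩ
  have int_u := integrable_inner_pFlux_gradient hp huE hwc hwΩ hwp
  have int_v := integrable_inner_pFlux_gradient hp hvE hwc hwΩ hwp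
  simp only [inner_sub_left]
  refine ⟨int_v.sub int_u, ?_⟩
  rw [integral_sub int_v int_u, hv.integral_inner_pFlux_gradient_eq_zero hp hΩ hvE hw hwc hwΩ hwp,
    hu.integral_inner_pFlux_gradient_eq_zero hp hΩ huE hw hwc hwΩ hwp, sub_zero]

lemma IsPHarmonicOn.gradient_truncExcess_ae_eq_zero (hp : 1 < p) (hε : 0 < ε) (hΩ : IsOpen Ω)
    (hu : IsPHarmonicOn p u Ω) (hv : IsPHarmonicOn p v Ω)
    (hK : IsCompact {x ∈ Ω | ε ≤ v x - u x}) :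
    ∇ (truncExcess ε u v Ω) =ᵐ[volume] 0 := by
  set w := truncExcess ε u v Ω
  have hwK : tsupport w ⊆ _ := tsupport_truncExcess_subset hε hK.isClosed
  have hwΩ : tsupport w ⊆ Ω := hwK.trans (sep_subset Ω _)
  have hwc : HasCompactSupport w := hK.of_isClosed_subset (isClosed_tsupport w) hwK
  have hw : Differentiable ℝ w :=
    differentiable_truncExcess hε hΩ hu.differentiableOn hv.differentiableOn hK.isClosed
  have hwp : MemLp (∇ w) (.ofReal p) := memLp_gradient_truncExcess hp.le hε hΩ
    hu.differentiableOn hv.differentiableOn (hu.locallyIntegrableOn_norm_gradient_rpow hp hΩ)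
    (hv.locallyIntegrableOn_norm_gradient_rpow hp hΩ) hK
  have inner_eq : ∀ x ∈ Ω, ⟪pFlux p (∇ v x) - pFlux p (∇ u x), ∇ w x⟫ =
      softStep ε (v x - u x) * ⟪pFlux p (∇ v x) - pFlux p (∇ u x), ∇ v x - ∇ u x⟫ := fun x hx => by
    rw [gradient_truncExcess hΩ hu.differentiableOn hv.differentiableOn hx, real_inner_smul_right]
  have inner_nonneg : ∀ x, 0 ≤ ⟪pFlux p (∇ v x) - pFlux p (∇ u x), ∇ w x⟫ := fun x => by
    by_cases hx : x ∈ tsupport w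
    · rw [inner_eq x (hwΩ hx)]
      exact mul_nonneg (softStep_nonneg _ _) (inner_pFlux_sub_pFlux_nonneg hp _ _)
    · rw [gradient_of_notMem_tsupport hx, inner_zero_right]
  obtain ⟨integrable_inner, integral_eq_zero⟩ :=
    hu.integral_inner_pFlux_sub_pFlux_eq_zero hp hΩ hv hw hwc hwΩ hwp
  have inner_ae_eq :=
    (integral_eq_zero_iff_of_nonneg inner_nonneg integrable_inner).1 integral_eq_zero
  filter_upwards [inner_ae_eq] with x hx
  by_cases hxw : x ∈ tsupport w
  · rw [Pi.zero_apply, inner_eq x (hwΩ hxw), mul_eq_zero] at hx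
    rw [gradient_truncExcess hΩ hu.differentiableOn hv.differentiableOn (hwΩ hxw), Pi.zero_apply,
      smul_eq_zero, sub_eq_zero]
    exact hx.imp_right (eq_of_inner_pFlux_sub_pFlux_eq_zero hp)
  · exact gradient_of_notMem_tsupport hxw

lemma IsPHarmonicOn.le_of_forall_frontier [Nontrivial E] (hp : 1 < p) (hΩ : IsOpen Ω)
    (hΩb : Bornology.IsBounded Ω) (hu : IsPHarmonicOn p u Ω) (hv : IsPHarmonicOn p v Ω)
    (h : ∀ y ∈ frontier Ω, ∀ ε > 0, ∀ᶠ x in 𝓝[Ω] y, v x < u x + ε) {x : E} (hx : x ∈ Ω) :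
    v x ≤ u x := by
  refine le_of_forall_pos_le_add fun ε hε => ?_
  have hK : IsCompact {x ∈ Ω | ε ≤ v x - u x} := isCompact_setOf_le_sub hΩ hΩb
    hu.differentiableOn.continuousOn hv.differentiableOn.continuousOn fun y hy => h y hy ε hε
  have truncExcess_eq_zero : truncExcess ε u v Ω = 0 := eq_zero_of_gradient_ae_eq_zero
    (differentiable_truncExcess hε hΩ hu.differentiableOn hv.differentiableOn hK.isClosed)
    (hK.of_isClosed_subset (isClosed_tsupport _) (tsupport_truncExcess_subset hε hK.isClosed))
    (hu.gradient_truncExcess_ae_eq_zero hp hε hΩ hv hK)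
  by_contra! hlt
  refine (softPos_pos hε (by linarith : ε < v x - u x)).ne' ?_
  simpa only [truncExcess, indicator_of_mem hx, Pi.zero_apply] using congrFun truncExcess_eq_zero x

end Comparison

section Divergence

variable {G : E → E}

lemma integrable_fderiv_apply (hG : ContDiff ℝ 1 G) (hGc : HasCompactSupport G) (v : E) :
    Integrable fun x => fderiv ℝ G x v :=
  ((hG.continuous_fderiv one_ne_zero).clm_apply continuous_const).integrable_of_hasCompactSupport
    ((hGc.fderiv ℝ).comp_left (g := fun L : E →L[ℝ] E => L v) rfl)

lemma integral_fderiv_apply_eq_zero (hG : ContDiff ℝ 1 G) (hGc : HasCompactSupport G) (v : E) :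
    ∫ x, fderiv ℝ G x v = 0 := by
  simpa using integral_smul_fderiv_eq_neg_fderiv_smul_of_integrable (μ := volume) (v := v)
    (f := fun _ => (1 : ℝ)) (g := G) (by simp) (by simpa using integrable_fderiv_apply hG hGc v)
    (by simpa using hG.continuous.integrable_of_hasCompactSupport hGc)
    (fun _ _ => differentiableAt_const _) (fun x _ => hG.differentiable one_ne_zero x)

lemma integral_trace_fderiv_eq_zero (hG : ContDiff ℝ 1 G) (hGc : HasCompactSupport G) :
    ∫ x, LinearMap.trace ℝ E (fderiv ℝ G x) = 0 := by
  let b := stdOrthonormalBasis ℝ E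
  simp_rw [LinearMap.trace_eq_sum_inner _ b, ContinuousLinearMap.coe_coe]
  rw [integral_finsetSum _ fun i _ => (integrable_fderiv_apply hG hGc (b i)).const_inner (b i)]
  refine Finset.sum_eq_zero fun i _ => ?_
  rw [integral_inner (integrable_fderiv_apply hG hGc (b i)),
    integral_fderiv_apply_eq_zero hG hGc, inner_zero_right]

lemma integral_inner_gradient_eq_zero_of_trace_fderiv_eq_zero {F : E → E} {φ : E → ℝ}
    (hF : ∀ x ∈ Ω, ContDiffAt ℝ 1 F x) (hdiv : ∀ x ∈ Ω, LinearMap.trace ℝ E (fderiv ℝ F x) = 0)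
    (hφ : ContDiff ℝ 1 φ) (hφc : HasCompactSupport φ) (hφΩ : tsupport φ ⊆ Ω) :
    ∫ x, ⟪F x, ∇ φ x⟫ = 0 := by
  have smul_eventuallyEq : ∀ x ∉ tsupport φ, (fun y => φ y • F y) =ᶠ[𝓝 x] fun _ => 0 :=
    fun x hx => by
      filter_upwards [notMem_tsupport_iff_eventuallyEq.1 hx] with y hy
      rw [hy, Pi.zero_apply, zero_smul]
  have contDiff_smul : ContDiff ℝ 1 fun x => φ x • F x := contDiff_iff_contDiffAt.2 fun x => by
    by_cases hx : x ∈ tsupport φ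
    · exact hφ.contDiffAt.smul (hF x (hφΩ hx))
    · exact contDiffAt_const.congr_of_eventuallyEq (smul_eventuallyEq x hx)
  rw [← integral_trace_fderiv_eq_zero contDiff_smul hφc.smul_right]
  refine integral_congr_ae (Eventually.of_forall fun x => ?_)
  by_cases hx : x ∈ tsupport φ
  · simp only [fderiv_fun_smul (hφ.differentiable one_ne_zero x)
        ((hF x (hφΩ hx)).differentiableAt one_ne_zero), ContinuousLinearMap.toLinearMap_add,
      ContinuousLinearMap.toLinearMap_smul, ContinuousLinearMap.coe_smulRight, map_add, map_smul,
      hdiv x (hφΩ hx), smul_zero, zero_add, LinearMap.trace_smulRight]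
    rw [real_inner_comm, inner_gradient_left, ContinuousLinearMap.coe_coe]
  · simp only [gradient_of_notMem_tsupport hx, inner_zero_right,
      (smul_eventuallyEq x hx).fderiv_eq, fderiv_fun_const, Pi.zero_apply,
      ContinuousLinearMap.toLinearMap_zero, map_zero]

end Divergence

section RadialPower

variable {V : Type*} [NormedAddCommGroup V] [InnerProductSpace ℝ V] {x z : V}

lemma hasGradientAt_norm_sub_rpow [CompleteSpace V] (hx : x ≠ z) (s : ℝ) :
    HasGradientAt (fun y => ‖y - z‖ ^ s) ((s * ‖x - z‖ ^ (s - 2)) • (x - z)) x := by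
  have norm_pos : 0 < ‖x - z‖ := norm_pos_iff.2 (sub_ne_zero.2 hx)
  have sq_rpow : ∀ (y : V) (a : ℝ), (‖y - z‖ ^ 2) ^ a = ‖y - z‖ ^ (2 * a) := fun y a => by
    rw [← Real.rpow_natCast_mul (norm_nonneg _), Nat.cast_ofNat]
  have hasFDerivAt_sq := (((hasFDerivAt_id x).sub_const z).norm_sq).rpow_const (p := s / 2)
    (Or.inl (pow_pos norm_pos 2).ne')
  simp only [id, sq_rpow, mul_sub, mul_div_cancel₀ s two_ne_zero, mul_one] at hasFDerivAt_sq
  rw [hasGradientAt_iff_hasFDerivAt]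
  refine hasFDerivAt_sq.congr_fderiv ?_
  ext v
  simp only [map_sub, ContinuousLinearMap.comp_id, smul_apply, sub_apply, coe_innerSL_apply,
    nsmul_eq_mul, Nat.cast_ofNat, smul_eq_mul, map_smul, InnerProductSpace.toDual_apply_apply]
  ring

lemma contDiffAt_norm_sub_rpow_smul_sub (hx : x ≠ z) (s : ℝ) :
    ContDiffAt ℝ 1 (fun y => ‖y - z‖ ^ s • (y - z)) x := by
  have sub_contDiffAt : ContDiffAt ℝ 1 (fun y => y - z) x := contDiffAt_id.sub contDiffAt_const
  exact ((sub_contDiffAt.norm ℝ (sub_ne_zero.2 hx)).rpow_const_of_ne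
    (norm_ne_zero_iff.2 (sub_ne_zero.2 hx))).smul sub_contDiffAt

lemma trace_fderiv_norm_sub_rpow_smul_sub [FiniteDimensional ℝ V] (hx : x ≠ z) (s : ℝ) :
    LinearMap.trace ℝ V (fderiv ℝ (fun y => ‖y - z‖ ^ s • (y - z)) x) =
      (s + Module.finrank ℝ V) * ‖x - z‖ ^ s := by
  have norm_pos : 0 < ‖x - z‖ := norm_pos_iff.2 (sub_ne_zero.2 hx)
  have hasFDerivAt_field := (hasGradientAt_norm_sub_rpow hx s).hasFDerivAt.smul
    ((hasFDerivAt_id x).sub_const z)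
  have rpow_mul_sq : ‖x - z‖ ^ (s - 2) * ‖x - z‖ ^ 2 = ‖x - z‖ ^ s := by
    rw [← Real.rpow_natCast, ← Real.rpow_add norm_pos, Nat.cast_ofNat, sub_add_cancel]
  rw [show (fun y => ‖y - z‖ ^ s • (y - z)) = (fun y => ‖y - z‖ ^ s) • fun y => id y - z from rfl,
    hasFDerivAt_field.fderiv]
  rw [ContinuousLinearMap.toLinearMap_add, map_add, ContinuousLinearMap.toLinearMap_smul,
    map_smul (LinearMap.trace ℝ V), ContinuousLinearMap.coe_id, LinearMap.trace_id,
    ContinuousLinearMap.coe_smulRight, LinearMap.trace_smulRight, ContinuousLinearMap.coe_coe,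
    InnerProductSpace.toDual_apply_apply, id, real_inner_smul_left, real_inner_self_eq_norm_sq,
    smul_eq_mul]
  linear_combination s * rpow_mul_sq

lemma pFlux_gradient_norm_sub_rpow [CompleteSpace V] (hx : x ≠ z) (s : ℝ) :
    pFlux p (∇ (fun y => ‖y - z‖ ^ s) x) =
      (|s| ^ (p - 2) * s) • ‖x - z‖ ^ (s * (p - 1) - p) • (x - z) := by
  have norm_pos : 0 < ‖x - z‖ := norm_pos_iff.2 (sub_ne_zero.2 hx)
  have rpow_flux : (‖x - z‖ ^ (s - 2) * ‖x - z‖) ^ (p - 2) * ‖x - z‖ ^ (s - 2) =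
      ‖x - z‖ ^ (s * (p - 1) - p) := by
    rw [← Real.rpow_add_one norm_pos.ne', ← Real.rpow_mul norm_pos.le, ← Real.rpow_add norm_pos]
    ring_nf
  rw [(hasGradientAt_norm_sub_rpow hx s).gradient, mul_smul, pFlux_smul, pFlux, norm_smul,
    Real.norm_of_nonneg (by positivity), ← rpow_flux]
  simp only [smul_smul, mul_assoc]

end RadialPower

section FundamentalSolution

open Module (finrank)

lemma isPHarmonicOn_norm_sub_rpow {s : ℝ} (hs : s * (p - 1) = p - finrank ℝ E) (z : E) :
    IsPHarmonicOn p (fun x => ‖x - z‖ ^ s) {z}ᶜ where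
  differentiableOn x hx :=
    (hasGradientAt_norm_sub_rpow hx s).differentiableAt.differentiableWithinAt
  integral_eq_zero φ hφ hφc hφz := by
    have flux_eq : ∀ x ∈ ({z}ᶜ : Set E), ⟪pFlux p (∇ (fun y => ‖y - z‖ ^ s) x), ∇ φ x⟫ =
        (|s| ^ (p - 2) * s) * ⟪‖x - z‖ ^ (-finrank ℝ E : ℝ) • (x - z), ∇ φ x⟫ := fun x hx => by
      rw [pFlux_gradient_norm_sub_rpow hx, real_inner_smul_left, hs, sub_sub_cancel_left]
    rw [setIntegral_congr_fun isOpen_compl_singleton.measurableSet flux_eq, integral_const_mul,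
      setIntegral_inner_gradient_eq_integral _ hφz,
      integral_inner_gradient_eq_zero_of_trace_fderiv_eq_zero
        (fun x hx => contDiffAt_norm_sub_rpow_smul_sub hx _) (fun x hx => by
          rw [trace_fderiv_norm_sub_rpow_smul_sub hx, neg_add_cancel, zero_mul])
        (hφ.of_le (by norm_num)) hφc hφz, mul_zero]

end FundamentalSolution

section AnnulusComparison

open Module (finrank)

lemma sInf_image_le_of_mem_closure {X : Type*} [TopologicalSpace X] {f : X → ℝ} {s : Set X} {x : X}
    (hbdd : BddBelow (f '' s)) (hf : ContinuousWithinAt f s x) (hx : x ∈ closure s) :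
    sInf (f '' s) ≤ f x := by
  have sInf_mem : sInf (f '' s) ∈ lowerBounds (closure (f '' s)) := by
    rw [lowerBounds_closure]
    exact fun _ => csInf_le hbdd
  exact sInf_mem (hf.mem_closure_image hx)

lemma frontier_ball_sdiff_closedBall_subset {X : Type*} [PseudoMetricSpace X] (z : X) (r R : ℝ) :
    frontier (ball z R \ closedBall z r) ⊆ sphere z r ∪ sphere z R := by
  intro y hy
  rw [sdiff_eq] at hy
  obtain ⟨hyR, -⟩ | ⟨-, hyr⟩ := frontier_inter_subset _ _ hy
  · exact .inr (frontier_ball_subset_sphere hyR)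
  · exact .inl (frontier_closedBall_subset_sphere (frontier_compl (closedBall z r) ▸ hyr))

namespace IsPHarmonicOn

variable {v : E → ℝ} {x z : E} {r R s : ℝ}

lemma le_of_forall_sphere (hp : 1 < p) (hr : 0 < r) (hu : IsPHarmonicOn p u (ball z R))
    (hu0 : ∀ y ∈ ball z R, 0 ≤ u y) (hv : IsPHarmonicOn p v {z}ᶜ)
    (inner_le : ∀ y ∈ sphere z r, v y ≤ u y) (outer_le : ∀ y ∈ sphere z R, v y ≤ 0)
    (hrx : r < ‖x - z‖) (hxR : ‖x - z‖ < R) : v x ≤ u x := by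
  have : Nontrivial E := nontrivial_of_ne x z (sub_ne_zero.1 (norm_pos_iff.1 (hr.trans hrx)))
  have hrR : r < R := hrx.trans hxR
  set A := ball z R \ closedBall z r
  have hA : IsOpen A := isOpen_ball.sdiff isClosed_closedBall
  have hAR : A ⊆ ball z R := sdiff_subset
  have hAz : A ⊆ {z}ᶜ := fun y hy hyz => hy.2 (hyz ▸ mem_closedBall_self hr.le)
  have hxA : x ∈ A :=
    ⟨mem_ball_iff_norm.2 hxR, fun h => hrx.not_ge (mem_closedBall_iff_norm.1 h)⟩
  have tendsto_v : ∀ y ≠ z, Tendsto v (𝓝[A] y) (𝓝 (v y)) := fun y hy =>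
    ((hv.differentiableOn.continuousOn y hy).continuousAt
      (isOpen_compl_singleton.mem_nhds hy)).tendsto.mono_left nhdsWithin_le_nhds
  have tendsto_u : ∀ y ∈ ball z R, Tendsto u (𝓝[A] y) (𝓝 (u y)) := fun y hy =>
    (hu.differentiableOn.continuousOn y hy).mono_left (nhdsWithin_mono y hAR)
  refine (hu.mono hAR).le_of_forall_frontier hp hA (isBounded_ball.subset hAR) (hv.mono hAz)
    (fun y hy ε hε => ?_) hxA
  obtain hy | hy := frontier_ball_sdiff_closedBall_subset z r R hy
  · exact (tendsto_v y (ne_of_mem_sphere hy hr.ne')).eventually_lt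
      ((tendsto_u y (sphere_subset_ball hrR hy)).add_const ε) (by linarith [inner_le y hy])
  · filter_upwards [(tendsto_v y (ne_of_mem_sphere hy (hr.trans hrR).ne')).eventually_lt_const
      ((outer_le y hy).trans_lt hε), self_mem_nhdsWithin] with w hvw hwA
    linarith [hu0 w (hAR hwA)]

lemma mul_rpow_sub_le_of_forall_sphere {m : ℝ} (hp : 1 < p)
    (hs : s * (p - 1) = p - finrank ℝ E) (hs0 : s < 0) (hu : IsPHarmonicOn p u (ball z R))
    (hu0 : ∀ y ∈ ball z R, 0 ≤ u y) (hr : 0 < r) (hm : ∀ y ∈ sphere z r, m ≤ u y)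
    (hrx : r < ‖x - z‖) (hxR : ‖x - z‖ < R) :
    m * (‖x - z‖ ^ s - R ^ s) ≤ u x * (r ^ s - R ^ s) := by
  have rpow_lt : 0 < r ^ s - R ^ s :=
    sub_pos.2 (Real.rpow_lt_rpow_of_neg hr (hrx.trans hxR) hs0)
  set a := m / (r ^ s - R ^ s)
  have ha : a * (r ^ s - R ^ s) = m := div_mul_cancel₀ m rpow_lt.ne'
  have hv : IsPHarmonicOn p (fun y => a * ‖y - z‖ ^ s + -(a * R ^ s)) {z}ᶜ :=
    (isPHarmonicOn_norm_sub_rpow hs z).const_mul_add isOpen_compl_singleton _ _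
  have comparison : a * ‖x - z‖ ^ s + -(a * R ^ s) ≤ u x :=
    hu.le_of_forall_sphere hp hr hu0 hv
      (fun y hy => by
        rw [mem_sphere_iff_norm.1 hy]
        linarith [hm y hy])
      (fun y hy => by rw [mem_sphere_iff_norm.1 hy, add_neg_cancel]) hrx hxR
  calc m * (‖x - z‖ ^ s - R ^ s)
      = (a * ‖x - z‖ ^ s + -(a * R ^ s)) * (r ^ s - R ^ s) := by rw [← ha]; ring
    _ ≤ u x * (r ^ s - R ^ s) := by gcongr

lemma sInf_image_ball_mul_rpow_sub_le (hp : 1 < p) (hs : s * (p - 1) = p - finrank ℝ E)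
    (hs0 : s < 0) (hu : IsPHarmonicOn p u (ball z R)) (hu0 : ∀ y ∈ ball z R, 0 ≤ u y) (hr : 0 < r)
    (hrx : r < ‖x - z‖) (hxR : ‖x - z‖ < R) :
    sInf (u '' ball z r) * (‖x - z‖ ^ s - R ^ s) ≤ u x * (r ^ s - R ^ s) := by
  have hrR : r < R := hrx.trans hxR
  refine hu.mul_rpow_sub_le_of_forall_sphere hp hs hs0 hu0 hr (fun y hy => ?_) hrx hxR
  refine sInf_image_le_of_mem_closure
    ⟨0, forall_mem_image.2 fun w hw => hu0 w (ball_subset_ball hrR.le hw)⟩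
    ((hu.differentiableOn.continuousOn y (sphere_subset_ball hrR hy)).mono
      (ball_subset_ball hrR.le)) ?_
  exact closure_ball z hr.ne' ▸ sphere_subset_closedBall hy

end IsPHarmonicOn

end AnnulusComparison

open Module (finrank) in
theorem stmt8_general {E : Type*} [NormedAddCommGroup E] [InnerProductSpace ℝ E]
    [FiniteDimensional ℝ E] [MeasurableSpace E] [BorelSpace E] {p : ℝ} (hp : 1 < p)
    (hpn : p < finrank ℝ E) :
    ∃ c : ℝ, 0 < c ∧ ∀ u : E → ℝ, IsPHarmonicOn p u (ball 0 5) → (∀ x ∈ ball (0 : E) 5, 0 ≤ u x) →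
      u 0 = 1 → ∀ (z : E) (r : ℝ), ‖z‖ ≤ 2 → 0 < r → (0 : E) ∉ closure (ball z r) →
        sInf (u '' ball z r) ≤ c * r ^ (-((finrank ℝ E - p) / (p - 1))) := by
  have hp0 : 0 < p - 1 := sub_pos.2 hp
  set s := -((finrank ℝ E - p) / (p - 1)) with s_def
  have hs : s * (p - 1) = p - finrank ℝ E := by
    rw [s_def, neg_mul, div_mul_cancel₀ _ hp0.ne', neg_sub]
  have hs0 : s < 0 := neg_neg_of_pos (div_pos (sub_pos.2 hpn) hp0)
  have rpow_lt : 0 < (2 : ℝ) ^ s - 3 ^ s :=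
    sub_pos.2 (Real.rpow_lt_rpow_of_neg two_pos (by norm_num) hs0)
  refine ⟨(2 ^ s - 3 ^ s)⁻¹, inv_pos.2 rpow_lt, fun u hu hu0 hu1 z r hz hr h0 => ?_⟩
  have ball_subset : ball z 3 ⊆ ball 0 5 :=
    ball_subset_ball' (by rw [dist_zero_right]; linarith)
  have hrz : r < ‖0 - z‖ := by
    rwa [closure_ball z hr.ne', mem_closedBall, not_le, dist_eq_norm] at h0
  have key := (hu.mono ball_subset).sInf_image_ball_mul_rpow_sub_le hp hs hs0
    (fun y hy => hu0 y (ball_subset hy)) hr hrz (by rw [zero_sub, norm_neg]; linarith)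
  have hrR : r < 3 := hrz.trans_le (by rw [zero_sub, norm_neg]; linarith)
  have sInf_nonneg : 0 ≤ sInf (u '' ball z r) := Real.sInf_nonneg <|
    forall_mem_image.2 fun y hy => hu0 y (ball_subset (ball_subset_ball hrR.le hy))
  rw [hu1, one_mul, zero_sub, norm_neg] at key
  rw [inv_mul_eq_div, le_div_iff₀ rpow_lt]
  have norm_z_pos : 0 < ‖z‖ := hr.trans (by rwa [zero_sub, norm_neg] at hrz)
  calc sInf (u '' ball z r) * (2 ^ s - 3 ^ s) ≤ sInf (u '' ball z r) * (‖z‖ ^ s - 3 ^ s) :=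
        mul_le_mul_of_nonneg_left
          (sub_le_sub_right (Real.rpow_le_rpow_of_nonpos norm_z_pos hz hs0.le) _) sInf_nonneg
    _ ≤ r ^ s - 3 ^ s := key
    _ ≤ r ^ s := sub_le_self _ (by positivity)

end Development

theorem stmt8 (n : ℕ) (hn : 3 ≤ n) (p : ℝ) (hp2 : 2 < p) (hpn : p < n) :
    ∃ c : ℝ, 0 < c ∧
      ∀ u : EuclideanSpace ℝ (Fin n) → ℝ,
        ContinuousOn u (ball (0 : EuclideanSpace ℝ (Fin n)) 5) →
        Differentiable ℝ u →
        (∀ φ : EuclideanSpace ℝ (Fin n) → ℝ, ContDiff ℝ (⊤ : ℕ∞) φ →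
          tsupport φ ⊆ ball (0 : EuclideanSpace ℝ (Fin n)) 5 →
          ∫ x in ball (0 : EuclideanSpace ℝ (Fin n)) 5,
            ‖gradient u x‖ ^ (p - 2) * ⟪gradient u x, gradient φ x⟫ = 0) →
        (∀ x ∈ ball (0 : EuclideanSpace ℝ (Fin n)) 5, 0 < u x) →
        u 0 = 1 →
        ∀ (z : EuclideanSpace ℝ (Fin n)) (r : ℝ), ‖z‖ ≤ 2 → 0 < r → r ≤ 1 →
          (0 : EuclideanSpace ℝ (Fin n)) ∉ closure (ball z r) →
          sInf (u '' ball z r) ≤ c * r ^ (-((n - p) / (p - 1))) := by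
  obtain ⟨c, hc, bound⟩ := stmt8_general (E := EuclideanSpace ℝ (Fin n)) (p := p) (by linarith)
    (by rwa [finrank_euclideanSpace_fin])
  rw [finrank_euclideanSpace_fin] at bound
  refine ⟨c, hc, fun u _ hu hweak hpos hu0 z r hz hr _ => bound u ⟨hu.differentiableOn, ?_⟩
    (fun x hx => (hpos x hx).le) hu0 z r hz hr⟩
  intro φ hφ _ hφΩ
  simpa only [pFlux, real_inner_smul_left] using hweak φ hφ hφΩ
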